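/- Let X be a compact geodesic space, E a chained entourage in X, and c a closed curve in X. Then there exists a closed curve c̄ freely E-homotopic to c whose length equals the infimum of the lengths of all closed curves freely E-homotopic to c. Any such c̄ is non-constant if and only if c is not freely E-null, and if c̄ is non-constant then c̄ is a closed (3ε/2)-geodesic for every ε > 0 with E_ε ⊆ E. -/

import Mathlib

open Filter Metric Set
open scoped ENNReal NNReal Topology

variable {X : Type*} [MetricSpace X]

/-- The metric entourage of size `ε`: pairs at distance less than `ε`. -/
def MetricEnt (X : Type*) [MetricSpace X] (ε : ℝ) : Set (X × X) :=
  {p | dist p.1 p.2 < ε}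

/-- An entourage in a metric space: a symmetric subset of `X × X` containing some
metric entourage `E_ε`. -/
def IsEntourage (E : Set (X × X)) : Prop :=
  (∀ p : X × X, p ∈ E → (p.2, p.1) ∈ E) ∧ ∃ ε > 0, MetricEnt X ε ⊆ E

/-- The `E`-ball about `x`: `B(x,E) = {y | (x,y) ∈ E}`. -/
def EBall (E : Set (X × X)) (x : X) : Set X := {y | (x, y) ∈ E}

/-- An `E`-chain: a nonempty finite sequence of points with all consecutive pairs in `E`. -/
def IsEChain (E : Set (X × X)) (l : List X) : Prop :=
  l ≠ [] ∧ l.Chain' (fun a b => (a, b) ∈ E)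

/-- Concatenation of two chains sharing an endpoint (the last point of `α` should be the
first point of `β`). -/
def chainConc (α β : List X) : List X := α ++ β.tail

/-- The length `L(α)` of a chain: the sum of the distances between consecutive points. -/
noncomputable def chainLength : List X → ℝ
  | [] => 0
  | [_] => 0
  | a :: b :: rest => dist a b + chainLength (b :: rest)

/-- A basic move of an `E`-homotopy: inserting a point between two consecutive points
(legal when both new pairs lie in `E`), or removing an interior point (legal when the
resulting consecutive pair lies in `E`).  Endpoints are never changed. -/
inductive EStep (E : Set (X × X)) : List X → List X → Prop
  | insert (pre : List X) (a x b : X) (post : List X)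
      (h1 : (a, x) ∈ E) (h2 : (x, b) ∈ E) :
      EStep E (pre ++ a :: b :: post) (pre ++ a :: x :: b :: post)
  | remove (pre : List X) (a x b : X) (post : List X)
      (h : (a, b) ∈ E) :
      EStep E (pre ++ a :: x :: b :: post) (pre ++ a :: b :: post)

/-- Two chains are `E`-homotopic if one passes from one to the other by finitely many
basic moves. -/
def EHomotopic (E : Set (X × X)) : List X → List X → Prop :=
  Relation.ReflTransGen (EStep E)

/-- Two `E`-loops `l₁`, `l₂` are freely `E`-homotopic if there are `E`-chains `α`, `β`
from a common point to their respective basepoints such that the corresponding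
conjugated loops are `E`-homotopic. -/
def FreelyEHomotopic (E : Set (X × X)) (l₁ l₂ : List X) : Prop :=
  ∃ α β : List X, IsEChain E α ∧ IsEChain E β ∧ α.head? = β.head? ∧
    α.getLast? = l₁.head? ∧ β.getLast? = l₂.head? ∧
    EHomotopic E (chainConc (chainConc α l₁) α.reverse)
      (chainConc (chainConc β l₂) β.reverse)

/-- A subset `A` is chain connected if for every `δ > 0` any two points of `A` are joined
by a `δ`-chain lying in `A`. -/
def ChainConnected (A : Set X) : Prop :=
  ∀ δ > 0, ∀ x ∈ A, ∀ y ∈ A, ∃ l : List X, IsEChain (MetricEnt X δ) l ∧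
    (∀ z ∈ l, z ∈ A) ∧ l.head? = some x ∧ l.getLast? = some y

/-- A chained entourage: an entourage contained in the closure of its interior, this
closure being compact if the space is not, such that any pair `(x,y) ∈ E` may be joined
by arbitrarily fine chains inside `B(x,E) ∩ B(y,E)`. -/
def IsChained (E : Set (X × X)) : Prop :=
  IsEntourage E ∧ E ⊆ closure (interior E) ∧
  (¬ CompactSpace X → IsCompact (closure (interior E))) ∧
  ∀ p ∈ E, ∀ δ > 0, ∃ l : List X, IsEChain (MetricEnt X δ) l ∧
    l.head? = some p.1 ∧ l.getLast? = some p.2 ∧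
    ∀ z ∈ l, z ∈ EBall E p.1 ∩ EBall E p.2

/-- An `F`-refinement of a `D`-chain: between each pair of consecutive points `x`, `y` of
the original chain insert an `F`-chain from `x` to `y` lying in `B(x,D) ∩ B(y,D)`. -/
inductive IsRefinement (D F : Set (X × X)) : List X → List X → Prop
  | single (x : X) : IsRefinement D F [x] [x]
  | cons (x y : X) (seg rest refRest : List X)
      (hseg : IsEChain F (x :: (seg ++ [y])))
      (hin : ∀ z ∈ x :: (seg ++ [y]), z ∈ EBall D x ∩ EBall D y)
      (hrest : IsRefinement D F (y :: rest) refRest) :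
      IsRefinement D F (x :: y :: rest) (x :: (seg ++ refRest))

/-- An `E`-subdivision of a curve `c` (regarded on `[0,1]`): an `E`-chain
`{c(t₀),…,c(tₙ)}` with `0 = t₀ ≤ ⋯ ≤ tₙ = 1` such that the restriction of `c` to each
`[tᵢ,tᵢ₊₁]` lies in `B(c(tᵢ),E) ∩ B(c(tᵢ₊₁),E)`. -/
def IsSubdivision (E : Set (X × X)) (c : ℝ → X) (l : List X) : Prop :=
  ∃ ts : List ℝ, ts.head? = some 0 ∧ ts.getLast? = some 1 ∧
    l = ts.map c ∧ IsEChain E l ∧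
    ts.Chain' (fun a b => a ≤ b ∧ ∀ s, a ≤ s → s ≤ b →
      c s ∈ EBall E (c a) ∩ EBall E (c b))

/-- `c` is a stringing of the chain `l` iff `c` is a curve on `[0,1]` of which `l` is an
`E`-subdivision. -/
def IsStringing (E : Set (X × X)) (l : List X) (c : ℝ → X) : Prop :=
  ContinuousOn c (Set.Icc 0 1) ∧ IsSubdivision E c l

/-- Two curves with the same endpoints are `E`-homotopic if they admit `E`-homotopic
`E`-subdivisions. -/
def CurveEHomotopic (E : Set (X × X)) (c₁ c₂ : ℝ → X) : Prop :=
  ∃ l₁ l₂ : List X, IsSubdivision E c₁ l₁ ∧ IsSubdivision E c₂ l₂ ∧ EHomotopic E l₁ l₂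

/-- Two closed curves are freely `E`-homotopic if they admit freely `E`-homotopic
`E`-subdivisions. -/
def CurveFreelyEHomotopic (E : Set (X × X)) (c₁ c₂ : ℝ → X) : Prop :=
  ∃ l₁ l₂ : List X, IsSubdivision E c₁ l₁ ∧ IsSubdivision E c₂ l₂ ∧ FreelyEHomotopic E l₁ l₂

/-- A `D`-small loop: a `D`-loop of the form `γ * τ * γ̄` where `τ` is a `D`-loop with
exactly three edges. -/
def IsSmallLoop (D : Set (X × X)) (l : List X) : Prop :=
  ∃ (γ : List X) (a b c : X), IsEChain D γ ∧ γ.getLast? = some a ∧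
    (a, b) ∈ D ∧ (b, c) ∈ D ∧ (c, a) ∈ D ∧
    l = chainConc (chainConc γ [a, b, c, a]) γ.reverse

/-- `C(X,ε)`: the minimal number of open `ε`-balls needed to cover `X`. -/
noncomputable def coveringNumber (X : Type*) [MetricSpace X] (ε : ℝ) : ℕ :=
  sInf {n : ℕ | ∃ s : Finset X, s.card = n ∧ (⋃ x ∈ s, Metric.ball x ε) = Set.univ}

/-- A geodesic space: any two points are joined by a curve whose length (total
variation) equals the distance between them. -/
def IsGeodesicSpace (X : Type*) [MetricSpace X] : Prop :=
  ∀ x y : X, ∃ f : ℝ → X, ContinuousOn f (Set.Icc 0 1) ∧ f 0 = x ∧ f 1 = y ∧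
    eVariationOn f (Set.Icc 0 1) = ENNReal.ofReal (dist x y)

/-- Fixed-endpoint path homotopy of two curves on `[0,1]`. -/
def PathHomotopicOn (f g : ℝ → X) : Prop :=
  ∃ H : ℝ × ℝ → X, ContinuousOn H (Set.Icc 0 1 ×ˢ Set.Icc 0 1) ∧
    (∀ t ∈ Set.Icc (0:ℝ) 1, H (0, t) = f t ∧ H (1, t) = g t) ∧
    (∀ s ∈ Set.Icc (0:ℝ) 1, H (s, 0) = f 0 ∧ H (s, 1) = f 1)

/-- Concatenation of a list of chains (each sharing its endpoint with the next). -/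
def concList : List (List X) → List X
  | [] => []
  | [l] => l
  | l :: l' :: ls => chainConc l (concList (l' :: ls))

/-- Concatenation of two curves on `[0,1]`. -/
noncomputable def concat2 (f g : ℝ → X) : ℝ → X :=
  fun t => if t ≤ 1 / 2 then f (2 * t) else g (2 * t - 1)

/-- Concatenation of a finite list of loops based at `p`. -/
noncomputable def concatLoops (p : X) : List (ℝ → X) → ℝ → X
  | [] => fun _ => p
  | [f] => f
  | f :: g :: fs => concat2 f (concatLoops p (g :: fs))

/-- A curve on `[0,1]` is parameterized proportional to arclength. -/
def PropToArclength (c : ℝ → X) : Prop :=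
  ∀ t ∈ Set.Icc (0:ℝ) 1, eVariationOn c (Set.Icc 0 t) =
    ENNReal.ofReal t * eVariationOn c (Set.Icc 0 1)

/-- A closed curve (parameterized on `[0,1]` proportional to arclength) is a closed
`κ`-geodesic if every subarc of its periodic extension of length at most `κ` has length
equal to the distance between its endpoints. -/
def IsClosedKGeodesic (c : ℝ → X) (κ : ℝ) : Prop :=
  c 0 = c 1 ∧
  ∀ s t : ℝ, s ≤ t →
    eVariationOn (fun u => c (Int.fract u)) (Set.Icc s t) ≤ ENNReal.ofReal κ →
    eVariationOn (fun u => c (Int.fract u)) (Set.Icc s t) =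
      ENNReal.ofReal (dist (c (Int.fract s)) (c (Int.fract t)))
set_option linter.unusedSectionVars false
set_option linter.all false
namespace SFC

def Good (E : Set (X × X)) (l : List X) : Prop :=
  l.IsChain (fun a b => (a, b) ∈ E) ∧ 2 ≤ l.length ∧ l.head? = l.getLast?

inductive Core : List X → List X → Prop
  | ins (pre : List X) (a x b : X) (post : List X) :
      Core (pre ++ a :: b :: post) (pre ++ a :: x :: b :: post)
  | conj (q : X) (l : List X) : Core l (q :: (l ++ [q]))

def FS (E : Set (X × X)) (l l' : List X) : Prop :=
  Good E l ∧ Good E l' ∧ (Core l l' ∨ Core l' l)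

def FH (E : Set (X × X)) : List X → List X → Prop := Relation.ReflTransGen (FS E)

variable {E : Set (X × X)}

theorem FS.symm {l l' : List X} (h : FS E l l') : FS E l' l := ⟨h.2.1, h.1, h.2.2.symm⟩

theorem FH.symm {l l' : List X} (h : FH E l l') : FH E l' l :=
  by
  induction h with
  | refl => exact .refl
  | tail _ h ih => exact .head (FS.symm h) ih

theorem FH.trans {l l' l'' : List X} (h : FH E l l') (h' : FH E l' l'') : FH E l l'' :=
  Relation.ReflTransGen.trans h h'

theorem EStep.good {l l' : List X} (h : EStep E l l') (hl : Good E l) : Good E l' := by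
  obtain ⟨h1, h2, h3⟩ := hl
  cases h with
  | insert pre a x b post ha hb =>
    refine ⟨?_, by simp; omega, ?_⟩
    · simp only [List.isChain_append, List.isChain_cons_cons] at h1 ⊢
      grind
    · cases pre <;> simp_all [List.getLast?_append, List.getLast?_cons]
  | remove pre a x b post ha =>
    refine ⟨?_, by simp; omega, ?_⟩
    · simp only [List.isChain_append, List.isChain_cons_cons] at h1 ⊢
      grind
    · cases pre <;> simp_all [List.getLast?_append, List.getLast?_cons]

theorem EStep.fs {l l' : List X} (h : EStep E l l') (hl : Good E l) : FS E l l' := by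
  refine ⟨hl, EStep.good h hl, ?_⟩
  cases h with
  | insert pre a x b post ha hb => exact Or.inl (Core.ins ..)
  | remove pre a x b post ha => exact Or.inr (Core.ins ..)

theorem EHom.good {l l' : List X} (h : EHomotopic E l l') (hl : Good E l) : Good E l' := by
  induction h with
  | refl => exact hl
  | tail _ h ih => exact EStep.good h ih

theorem EHom.fh {l l' : List X} (h : EHomotopic E l l') (hl : Good E l) : FH E l l' := by
  induction h with
  | refl => exact .refl
  | tail h' h ih => exact .tail ih (EStep.fs h (EHom.good h' hl))

theorem EStep.ctx {l l' : List X} (h : EStep E l l') (A B : List X) :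
    EStep E (A ++ l ++ B) (A ++ l' ++ B) := by
  cases h with
  | insert pre a x b post ha hb =>
    have := EStep.insert (A ++ pre) a x b (post ++ B) ha hb
    simpa using this
  | remove pre a x b post ha =>
    have := EStep.remove (A ++ pre) a x b (post ++ B) ha
    simpa using this

theorem EHom.ctx {l l' : List X} (h : EHomotopic E l l') (A B : List X) :
    EHomotopic E (A ++ l ++ B) (A ++ l' ++ B) := by
  induction h with
  | refl => exact .refl
  | tail _ h ih => exact .tail ih (EStep.ctx h A B)

/-- Reformulated free homotopy. -/
def Fr (E : Set (X × X)) (l₁ l₂ : List X) : Prop :=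
  ∃ A B : List X, (A ++ l₁).IsChain (fun a b => (a, b) ∈ E) ∧
    (B ++ l₂).IsChain (fun a b => (a, b) ∈ E) ∧ (A ++ l₁).head? = (B ++ l₂).head? ∧
    EHomotopic E (A ++ l₁ ++ A.reverse) (B ++ l₂ ++ B.reverse)

theorem freely_of_Fr {l₁ l₂ : List X} (h1 : l₁ ≠ []) (h2 : l₂ ≠ []) (h : Fr E l₁ l₂) :
    FreelyEHomotopic E l₁ l₂ := by
  obtain ⟨A, B, hA, hB, hh, hhom⟩ := h
  obtain ⟨p, w, rfl⟩ := List.exists_cons_of_ne_nil h1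
  obtain ⟨q, v, rfl⟩ := List.exists_cons_of_ne_nil h2
  refine ⟨A ++ [p], B ++ [q], ⟨by simp, ?_⟩, ⟨by simp, ?_⟩, ?_, by simp, by simp, ?_⟩
  · change List.IsChain _ _
    rw [List.isChain_append] at hA ⊢; simp_all
  · change List.IsChain _ _
    rw [List.isChain_append] at hB ⊢; simp_all
  · cases A <;> cases B <;> simp_all
  · simpa [chainConc] using hhom

theorem Fr_of_freely {l₁ l₂ : List X} (h1 : l₁ ≠ []) (h2 : l₂ ≠ [])
    (hl₁ : l₁.IsChain (fun a b => (a, b) ∈ E)) (hl₂ : l₂.IsChain (fun a b => (a, b) ∈ E))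
    (h : FreelyEHomotopic E l₁ l₂) : Fr E l₁ l₂ := by
  obtain ⟨α, β, ⟨hα, hα'⟩, ⟨hβ, hβ'⟩, hh, ha, hb, hhom⟩ := h
  obtain ⟨p, w, rfl⟩ := List.exists_cons_of_ne_nil h1
  obtain ⟨q, v, rfl⟩ := List.exists_cons_of_ne_nil h2
  obtain ⟨A, a, rfl⟩ := List.eq_nil_or_concat' α |>.resolve_left hα
  obtain ⟨B, b, rfl⟩ := List.eq_nil_or_concat' β |>.resolve_left hβ
  replace hα' : List.IsChain _ _ := hα'
  replace hβ' : List.IsChain _ _ := hβ'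
  simp at ha hb
  subst ha hb
  refine ⟨A, B, ?_, ?_, ?_, ?_⟩
  · rw [List.isChain_append] at hα' ⊢; simp_all
  · rw [List.isChain_append] at hβ' ⊢; simp_all
  · cases A <;> cases B <;> simp_all
  · simpa [chainConc] using hhom

theorem conj_many (hsym : ∀ a b, (a, b) ∈ E → (b, a) ∈ E) (A : List X) :
    ∀ l : List X, Good E l → (A ++ l).IsChain (fun a b => (a, b) ∈ E) →
    Good E (A ++ l ++ A.reverse) ∧ FH E l (A ++ l ++ A.reverse) := by
  induction A using List.reverseRecOn with
  | nil => intro l hl _; simpa using ⟨hl, Relation.ReflTransGen.refl⟩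
  | append_singleton A q ih =>
    intro l hl hc
    have hg : Good E (q :: (l ++ [q])) := by
      obtain ⟨g1, g2, g3⟩ := hl
      obtain ⟨p, w, rfl⟩ := List.exists_cons_of_ne_nil (l := l) (by rintro rfl; simp at g2)
      have hqp : (q, p) ∈ E := by
        simp only [List.append_assoc, List.isChain_append] at hc
        simp_all
      refine ⟨?_, by simp, by simp [List.getLast?_cons]⟩
      rw [List.cons_append, List.isChain_cons_cons, ← List.cons_append, List.isChain_append]
      refine ⟨hqp, g1, by simp, ?_⟩
      intro x hx y hy
      rw [← g3] at hx
      simp at hx hy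
      subst hx hy
      exact hsym _ _ hqp
    have := ih (q :: (l ++ [q])) hg (by
      have e : A ++ q :: (l ++ [q]) = (A ++ [q] ++ l) ++ [q] := by simp
      rw [e, List.isChain_append]
      refine ⟨hc, by simp, ?_⟩
      intro x hx y hy
      have g1 := hg.1
      rw [← List.cons_append, List.isChain_append] at g1
      refine g1.2.2 x ?_ y hy
      have : l ≠ [] := by rintro rfl; simp [Good] at hl
      rw [List.getLast?_append] at hx
      rw [List.getLast?_cons]
      cases h : l.getLast? with
      | none => simp_all
      | some z => simp_all)
    have e : A ++ [q] ++ l ++ (A ++ [q]).reverse = A ++ q :: (l ++ [q]) ++ A.reverse := by simp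
    rw [e]
    exact ⟨this.1, .head ⟨hl, hg, Or.inl (Core.conj q l)⟩ this.2⟩

theorem FH_of_freely (hsym : ∀ a b, (a, b) ∈ E → (b, a) ∈ E) {l₁ l₂ : List X}
    (h1 : Good E l₁) (h2 : Good E l₂) (h : FreelyEHomotopic E l₁ l₂) : FH E l₁ l₂ := by
  have n1 : l₁ ≠ [] := by rintro rfl; simp [Good] at h1
  have n2 : l₂ ≠ [] := by rintro rfl; simp [Good] at h2
  obtain ⟨A, B, hA, hB, -, hh⟩ := Fr_of_freely n1 n2 h1.1 h2.1 h
  obtain ⟨a1, a2⟩ := conj_many hsym A l₁ h1 hA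
  obtain ⟨b1, b2⟩ := conj_many hsym B l₂ h2 hB
  exact (a2.trans (EHom.fh hh a1)).trans b2.symm

theorem FH_of_freely_const (hsym : ∀ a b, (a, b) ∈ E → (b, a) ∈ E) (hrefl : ∀ a, (a, a) ∈ E)
    {l : List X} {x : X}
    (h1 : Good E l) (h : FreelyEHomotopic E l [x]) : FH E l [x, x] := by
  have n1 : l ≠ [] := by rintro rfl; simp [Good] at h1
  obtain ⟨A, B, hA, hB, -, hh⟩ := Fr_of_freely n1 (by simp) h1.1 (by simp) h
  obtain ⟨a1, a2⟩ := conj_many hsym A l h1 hA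
  have gx : Good E [x, x] := ⟨by simp [hrefl], by simp, by simp⟩
  have gB := EHom.good hh a1
  obtain rfl | ⟨B, q, rfl⟩ := List.eq_nil_or_concat' B
  · simp [Good] at gB
  have hqx : (q, x) ∈ E := by
    simp only [List.append_assoc, List.isChain_append] at hB
    simp_all
  have hB' : ((B ++ [q]) ++ [x, x]).IsChain (fun a b => (a, b) ∈ E) := by
    have : ((B ++ [q]) ++ [x, x]) = ((B ++ [q]) ++ [x]) ++ [x] := by simp
    rw [this, List.isChain_append]
    refine ⟨hB, by simp, ?_⟩
    simp [hrefl]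
  obtain ⟨b1, b2⟩ := conj_many hsym (B ++ [q]) [x, x] gx hB'
  refine ((a2.trans (EHom.fh hh a1)).trans ?_).trans b2.symm
  refine Relation.ReflTransGen.single ?_
  refine EStep.fs ?_ gB
  have := EStep.insert (E := E) (B ++ [q]) x x q B.reverse (hrefl x) (hsym _ _ hqx)
  simpa using this

/-- spike insertion -/
theorem spike (hrefl : ∀ a, (a, a) ∈ E) (A B : List X) (p q : X)
    (hpq : (p, q) ∈ E) (hqp : (q, p) ∈ E)
    (hc : (A ++ p :: B).IsChain (fun a b => (a, b) ∈ E)) (hne : A ≠ [] ∨ B ≠ []) :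
    EHomotopic E (A ++ p :: B) (A ++ p :: q :: p :: B) := by
  have key : EStep E (A ++ p :: p :: B) (A ++ p :: q :: p :: B) := EStep.insert A p q p B hpq hqp
  refine .tail (.single ?_) key
  rw [List.isChain_append] at hc
  rcases hne with h | h
  · obtain ⟨A, a, rfl⟩ := List.eq_nil_or_concat' A |>.resolve_left h
    have : (a, p) ∈ E := by simp_all
    simpa using EStep.insert A a p p B this (hrefl p)
  · obtain ⟨b, B, rfl⟩ := List.exists_cons_of_ne_nil h
    have : (p, b) ∈ E := by simp_all
    exact EStep.insert A p p b B (hrefl p) this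

theorem Fr_step (hsym : ∀ a b, (a, b) ∈ E → (b, a) ∈ E) (hrefl : ∀ a, (a, a) ∈ E)
    {l₁ l l' : List X} (h : Fr E l₁ l) (hs : FS E l l') : Fr E l₁ l' := by
  obtain ⟨A, B, hA, hB, hh, hom⟩ := h
  obtain ⟨hg, hg', hc⟩ := hs
  have chain_of (hhd : l.head? = l'.head?) : (B ++ l').IsChain (fun a b => (a, b) ∈ E) := by
    rw [List.isChain_append] at hB ⊢
    exact ⟨hB.1, hg'.1, by rw [← hhd]; exact hB.2.2⟩
  have head_of (hhd : l.head? = l'.head?) : (A ++ l₁).head? = (B ++ l').head? := by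
    rw [hh]; simp [List.head?_append, hhd]
  have estep (hhd : l.head? = l'.head?) (h : EStep E l l') : Fr E l₁ l' :=
    ⟨A, B, hA, chain_of hhd, head_of hhd, hom.tail (EStep.ctx h B B.reverse)⟩
  rcases hc with hc | hc
  · cases hc with
    | ins pre a x b post =>
      have := hg'.1
      rw [List.isChain_append] at this
      refine estep (by cases pre <;> simp) (EStep.insert _ _ _ _ _ ?_ ?_) <;> simp_all
    | conj q =>
      have hg0 := hg
      obtain ⟨g1, g2, g3⟩ := hg
      obtain ⟨p, w, rfl⟩ := List.exists_cons_of_ne_nil (l := l) (by rintro rfl; simp at g2)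
      obtain ⟨w, p', rfl⟩ := List.eq_nil_or_concat' w |>.resolve_left (by rintro rfl; simp at g2)
      have : p = p' := by simpa [List.getLast?_cons] using g3
      subst this
      have hqp : (q, p) ∈ E := by have := hg'.1; simp at this; exact this.1
      have hpq := hsym _ _ hqp
      have hgB := (conj_many hsym B _ hg0 hB).1
      refine ⟨A, B ++ [p], hA, ?_, ?_, hom.trans ?_⟩
      · have e : B ++ [p] ++ q :: (p :: (w ++ [p]) ++ [q]) =
          (B ++ [p]) ++ (q :: (p :: (w ++ [p]) ++ [q])) := by simp
        rw [e, List.isChain_append]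
        refine ⟨?_, hg'.1, by simp [hpq]⟩
        rw [List.isChain_append] at hB ⊢
        simp_all
      · rw [hh]; cases B <;> simp
      · have e0 : B ++ p :: (w ++ [p]) ++ B.reverse = B ++ p :: (w ++ [p] ++ B.reverse) := by simp
        have s1 := spike hrefl B (w ++ [p] ++ B.reverse) p q hpq hqp
          (by rw [← e0]; exact hgB.1) (by simp)
        have g := EHom.good s1 (by rw [← e0]; exact hgB)
        have e1 : B ++ p :: q :: p :: (w ++ [p] ++ B.reverse) =
          (B ++ p :: q :: p :: w) ++ p :: B.reverse := by simp
        have s2 := spike hrefl (B ++ p :: q :: p :: w) B.reverse p q hpq hqp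
          (by rw [← e1]; exact g.1) (by simp)
        rw [e0]
        refine s1.trans ?_
        rw [e1]
        refine s2.trans ?_
        have e2 : (B ++ p :: q :: p :: w) ++ p :: q :: p :: B.reverse =
          B ++ [p] ++ q :: (p :: (w ++ [p]) ++ [q]) ++ (B ++ [p]).reverse := by simp
        rw [e2]
  · cases hc with
    | ins pre a x b post =>
      have := hg'.1
      rw [List.isChain_append] at this
      refine estep (by cases pre <;> simp) (EStep.remove _ _ _ _ _ ?_); simp_all
    | conj q =>
      refine ⟨A, B ++ [q], hA, ?_, ?_, ?_⟩
      · have e : B ++ q :: (l' ++ [q]) = (B ++ [q] ++ l') ++ [q] := by simp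
        rw [e, List.isChain_append] at hB
        exact hB.1
      · rw [hh]; cases B <;> simp
      · simpa using hom

theorem Fr_of_FH (hsym : ∀ a b, (a, b) ∈ E → (b, a) ∈ E) (hrefl : ∀ a, (a, a) ∈ E)
    {l l' : List X} (hl : Good E l) (h : FH E l l') : Fr E l l' := by
  induction h with
  | refl => exact ⟨[], [], by simpa using hl.1, by simpa using hl.1, rfl, .refl⟩
  | tail _ h ih => exact Fr_step hsym hrefl ih h

theorem FH.good {l l' : List X} (hl : Good E l) (h : FH E l l') : Good E l' := by
  induction h with
  | refl => exact hl
  | tail _ h ih => exact h.2.1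

theorem Good.ne {l : List X} (hl : Good E l) : l ≠ [] := by
  rintro rfl; simp [Good] at hl

theorem freely_of_FH (hsym : ∀ a b, (a, b) ∈ E → (b, a) ∈ E) (hrefl : ∀ a, (a, a) ∈ E)
    {l l' : List X} (hl : Good E l) (h : FH E l l') : FreelyEHomotopic E l l' :=
  freely_of_Fr hl.ne (FH.good hl h).ne (Fr_of_FH hsym hrefl hl h)

theorem freely_const_of_FH (hsym : ∀ a b, (a, b) ∈ E → (b, a) ∈ E) (hrefl : ∀ a, (a, a) ∈ E)
    {l : List X} {x : X} (hl : Good E l) (h : FH E l [x, x]) : FreelyEHomotopic E l [x] := by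
  have gx : Good E [x, x] := ⟨by simp [hrefl], by simp, by simp⟩
  have : FH E l [x, x, x] := .tail h (EStep.fs (EStep.insert [] x x x [] (hrefl x) (hrefl x)) gx)
  refine freely_of_Fr hl.ne (by simp) ?_
  obtain ⟨A, B, hA, hB, hh, hom⟩ := Fr_of_FH hsym hrefl hl this
  refine ⟨A, B ++ [x], hA, ?_, ?_, ?_⟩
  · have e : B ++ [x, x, x] = (B ++ [x] ++ [x]) ++ [x] := by simp
    rw [e, List.isChain_append] at hB
    exact hB.1
  · rw [hh]; cases B <;> simp
  · simpa using hom


theorem insert_all (hsym : ∀ a b, (a, b) ∈ E → (b, a) ∈ E) (f : ℝ → X) (z : ℝ) (v0 : List ℝ) :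
    ∀ (ts0 : List ℝ) (u : ℝ), ts0.Sublist v0 →
    (∀ b ∈ (ts0 ++ [z]).head?, ∀ s, u ≤ s → s ≤ b → (f b, f s) ∈ E) →
    ((ts0 ++ [z]).IsChain (fun a b => a ≤ b ∧ ∀ s, a ≤ s → s ≤ b →
      f s ∈ EBall E (f a) ∩ EBall E (f b))) →
    ((u :: (v0 ++ [z])).IsChain (fun a b => a ≤ b ∧ (f a, f b) ∈ E)) →
    EHomotopic E ((u :: (ts0 ++ [z])).map f) ((u :: (v0 ++ [z])).map f) := by
  induction v0 with
  | nil =>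
    intro ts0 u hs _ _ _
    rw [List.sublist_nil] at hs
    subst hs
    exact .refl
  | cons w v1 ih =>
    intro ts0 u hs hQ hP hv
    have hv' := hv
    rw [List.cons_append, List.isChain_cons_cons] at hv
    obtain ⟨⟨huw, huwE⟩, hv1⟩ := hv
    have hpw : (w :: (v1 ++ [z])).Pairwise (· ≤ ·) := by
      rw [← List.isChain_iff_pairwise]
      exact hv1.imp (fun _ _ h => h.1)
    cases hs with
    | cons _ hs =>
      obtain ⟨b, r, hbr⟩ := List.exists_cons_of_ne_nil (l := ts0 ++ [z]) (by simp)
      have hb : b ∈ v1 ++ [z] := by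
        have : b ∈ ts0 ++ [z] := by rw [hbr]; simp
        exact (hs.append (List.Sublist.refl [z])).subset this
      have hwb : w ≤ b := (List.pairwise_cons.1 hpw).1 b hb
      have hQb := hQ b (by simp [hbr])
      have h1 := ih ts0 w hs (by
        intro b' hb' s h1 h2
        exact hQ b' hb' s (huw.trans h1) h2) hP hv1
      have h2 : EStep E ((u :: (ts0 ++ [z])).map f) ((u :: w :: (ts0 ++ [z])).map f) := by
        rw [hbr]
        exact EStep.insert [] (f u) (f w) (f b) (r.map f) huwE (hsym _ _ (hQb w huw hwb))
      refine .head h2 ?_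
      change EHomotopic E _ _
      have := EHom.ctx h1 [f u] []
      simpa using this
    | cons_cons _ hs =>
      rename_i ts1
      have h1 := ih ts1 w hs (by
        intro b hb s h1 h2
        obtain ⟨b', r, hbr⟩ := List.exists_cons_of_ne_nil (l := ts1 ++ [z]) (by simp)
        rw [List.cons_append, hbr, List.isChain_cons_cons] at hP
        rw [hbr] at hb
        simp at hb
        subst hb
        exact (hP.1.2 s h1 h2).2) (by
          rw [List.cons_append] at hP
          exact hP.tail) hv1
      have := EHom.ctx h1 [f u] []
      simpa using this

theorem sub_decomp {f : ℝ → X} {l : List X} (h : IsSubdivision E f l) :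
    ∃ m : List ℝ, l = (0 :: (m ++ [1])).map f ∧
      (0 :: (m ++ [1])).IsChain (fun a b => a ≤ b ∧ ∀ s, a ≤ s → s ≤ b →
      f s ∈ EBall E (f a) ∩ EBall E (f b)) ∧ l.IsChain (fun a b => (a, b) ∈ E) := by
  obtain ⟨ts, h0, h1, hl, hc, hch⟩ := h
  obtain ⟨r, rfl⟩ : ∃ r, ts = 0 :: r := by
    cases ts <;> simp_all
  obtain rfl | ⟨m, z, rfl⟩ := List.eq_nil_or_concat' r
  · simp at h1
  have : z = 1 := by simpa [List.getLast?_cons] using h1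
  subst this
  exact ⟨m, hl, hch, hc.2⟩

theorem sub_good {f : ℝ → X} (hf : f 0 = f 1) {l : List X} (h : IsSubdivision E f l) :
    Good E l := by
  obtain ⟨m, rfl, -, h⟩ := sub_decomp h
  exact ⟨h, by simp, by simp [List.getLast?_cons, hf]⟩

theorem pairwise_gap (l : List ℝ) (h : l.Pairwise (· ≤ ·)) :
    l.IsChain (fun u w => u ≤ w ∧ ∀ g ∈ l, g ≤ u ∨ w ≤ g) := by
  rw [List.isChain_iff_getElem]
  intro i hi
  rw [List.pairwise_iff_getElem] at h
  refine ⟨h _ _ _ _ (by omega), ?_⟩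
  intro g hg
  obtain ⟨j, hj, rfl⟩ := List.getElem_of_mem hg
  rcases lt_trichotomy j i with h1 | h1 | h1
  · exact Or.inl (h _ _ _ _ h1)
  · subst h1; exact Or.inl le_rfl
  · rcases Nat.eq_or_lt_of_le (Nat.succ_le_of_lt h1) with h2 | h2
    · right; simp [← h2]
    · exact Or.inr (h _ _ _ _ h2)

theorem unif_mod {f : ℝ → X} (hf : ContinuousOn f (Icc 0 1)) {ε : ℝ} (hε : 0 < ε) :
    ∃ δ > 0, ∀ s ∈ Icc (0:ℝ) 1, ∀ t ∈ Icc (0:ℝ) 1, |s - t| < δ → dist (f s) (f t) < ε := by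
  have := isCompact_Icc.uniformContinuousOn_of_continuous hf
  rw [Metric.uniformContinuousOn_iff] at this
  obtain ⟨δ, hδ, h⟩ := this ε hε
  exact ⟨δ, hδ, fun s hs t ht hst => h s hs t ht (by rwa [Real.dist_eq])⟩

theorem sub_equiv (hsym : ∀ a b, (a, b) ∈ E → (b, a) ∈ E) {ε : ℝ} (hε : 0 < ε)
    (hE : MetricEnt X ε ⊆ E) {f : ℝ → X} (hf : ContinuousOn f (Icc 0 1)) (hcl : f 0 = f 1)
    {l l' : List X} (h : IsSubdivision E f l) (h' : IsSubdivision E f l') : FH E l l' := by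
  have gl := sub_good hcl h
  have gl' := sub_good hcl h'
  obtain ⟨m, rfl, hm, -⟩ := sub_decomp h
  obtain ⟨m', rfl, hm', -⟩ := sub_decomp h'
  obtain ⟨δ, hδ, hmod⟩ := unif_mod hf hε
  obtain ⟨K, hK⟩ := exists_nat_gt (1 / δ)
  have hKpos : (0:ℝ) < K := lt_trans (by positivity) hK
  have hKδ : 1 / (K:ℝ) < δ := by
    rw [div_lt_iff₀ hδ] at hK
    rw [div_lt_iff₀ hKpos]; linarith
  set G : List ℝ := (List.range (K + 1)).map (fun i : ℕ => (i:ℝ) / K) with hG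
  have hGmem : ∀ i : ℕ, i ≤ K → (i:ℝ) / K ∈ G := by
    intro i hi
    rw [hG, List.mem_map]
    exact ⟨i, List.mem_range.2 (by omega), rfl⟩
  have hG01 : ∀ g ∈ G, 0 ≤ g ∧ g ≤ 1 := by
    intro g hg
    rw [hG, List.mem_map] at hg
    obtain ⟨i, hi, rfl⟩ := hg
    have : (i:ℝ) ≤ K := by exact_mod_cast Nat.lt_succ_iff.1 (List.mem_range.1 hi)
    exact ⟨by positivity, by rw [div_le_one hKpos]; exact this⟩
  have hpw : ∀ m : List ℝ, (0 :: (m ++ [1])).IsChain (fun a b => a ≤ b ∧ ∀ s, a ≤ s → s ≤ b →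
      f s ∈ EBall E (f a) ∩ EBall E (f b)) → (0 :: (m ++ [1])).Pairwise (· ≤ ·) := by
    intro m hm
    rw [← List.isChain_iff_pairwise]
    exact hm.imp (fun _ _ h => h.1)
  have hm01 : ∀ m : List ℝ, (0 :: (m ++ [1])).Pairwise (· ≤ ·) → ∀ g ∈ m, 0 ≤ g ∧ g ≤ 1 := by
    intro m hm g hg
    rw [List.pairwise_cons, List.pairwise_append] at hm
    exact ⟨hm.1 g (by simp [hg]), hm.2.2.2 g hg 1 (by simp)⟩
  set V : List ℝ := (m ++ m' ++ G).insertionSort (· ≤ ·) with hV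
  have hV01 : ∀ g ∈ V, 0 ≤ g ∧ g ≤ 1 := by
    intro g hg
    rw [hV, List.mem_insertionSort, List.mem_append, List.mem_append] at hg
    rcases hg with (hg | hg) | hg
    · exact hm01 m (hpw m hm) g hg
    · exact hm01 m' (hpw m' hm') g hg
    · exact hG01 g hg
  have hVpw : (0 :: (V ++ [1])).Pairwise (· ≤ ·) := by
    rw [List.pairwise_cons, List.pairwise_append]
    refine ⟨?_, List.pairwise_insertionSort _ _, by simp, ?_⟩
    · intro g hg
      rcases List.mem_append.1 hg with h | h
      · exact (hV01 g h).1
      · simp at h; simp [h]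
    · intro g hg b hb
      simp at hb
      subst hb
      exact (hV01 g hg).2
  have hall01 : ∀ g ∈ (0 :: (V ++ [1])), g ∈ Icc (0:ℝ) 1 := by
    intro g hg
    simp at hg
    rcases hg with rfl | hg | rfl
    · simp
    · exact hV01 g hg
    · simp
  have hVc : (0 :: (V ++ [1])).IsChain (fun a b => a ≤ b ∧ (f a, f b) ∈ E) := by
    have := pairwise_gap _ hVpw
    rw [List.isChain_iff_getElem] at this ⊢
    intro i hi
    have h2 := this i hi
    refine ⟨h2.1, hE ?_⟩
    have ha := hall01 _ (List.getElem_mem (by omega : i < (0 :: (V ++ [1])).length))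
    have hb := hall01 _ (List.getElem_mem hi)
    generalize (0 :: (V ++ [1]))[i] = u at *
    generalize (0 :: (V ++ [1]))[i + 1] = w at *
    refine hmod u ha w hb ?_
    rw [abs_sub_comm, abs_of_nonneg (by linarith [h2.1])]
    by_contra hcon
    push Not at hcon
    -- grid point
    set j := ⌊u * K⌋₊ + 1 with hj
    have h3 : u * K < j := by
      have := Nat.lt_floor_add_one (u * K); push_cast [hj]; exact this
    have h4 : (j:ℝ) ≤ u * K + 1 := by
      have := Nat.floor_le (a := u * K) (mul_nonneg ha.1 hKpos.le); push_cast [hj]; linarith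
    have h5 : (j:ℝ) / K ≤ u + 1 / K := by
      rw [div_le_iff₀ hKpos, add_mul, one_div, inv_mul_cancel₀ hKpos.ne']; exact h4
    have h6 : u < (j:ℝ) / K := by rw [lt_div_iff₀ hKpos]; exact h3
    have h7 : (j:ℝ) / K ≤ 1 := by linarith [hb.2]
    have h8 : j ≤ K := by rw [div_le_one hKpos] at h7; exact_mod_cast h7
    have h9 : (j:ℝ) / K ∈ (0 :: (V ++ [1])) := by
      have := hGmem j h8
      simp [hV, this]
    rcases h2.2 _ h9 with h | h <;> linarith
  have key : ∀ m : List ℝ, m.Subperm (m ++ m' ++ G) ∨ True → m.Sublist V →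
      (0 :: (m ++ [1])).IsChain (fun a b => a ≤ b ∧ ∀ s, a ≤ s → s ≤ b →
      f s ∈ EBall E (f a) ∩ EBall E (f b)) → Good E ((0 :: (m ++ [1])).map f) →
      FH E ((0 :: (m ++ [1])).map f) ((0 :: (V ++ [1])).map f) := by
    intro m _ hs hm hg
    refine EHom.fh (insert_all hsym f 1 V m 0 hs ?_ hm.tail hVc) hg
    intro b hb s h1 h2
    obtain ⟨b', r, hbr⟩ := List.exists_cons_of_ne_nil (l := m ++ [1]) (by simp)
    rw [hbr, List.isChain_cons_cons] at hm
    rw [hbr] at hb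
    simp at hb
    subst hb
    exact (hm.1.2 s h1 h2).2
  have sl : ∀ m : List ℝ, (0 :: (m ++ [1])).Pairwise (· ≤ ·) → m.Pairwise (· ≤ ·) := by
    intro m hm
    rw [List.pairwise_cons, List.pairwise_append] at hm
    exact hm.2.1
  have s1 : m.Sublist V := List.sublist_insertionSort (sl m (hpw m hm)) (by simp)
  have s2 : m'.Sublist V := List.sublist_insertionSort (sl m' (hpw m' hm')) (by simp)
  exact (key m (Or.inr trivial) s1 hm gl).trans (key m' (Or.inr trivial) s2 hm' gl').symm


def seqL (x : ℕ → X) (N : ℕ) : List X := (List.range (N + 1)).map x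

theorem seqL_succ (x : ℕ → X) (N : ℕ) : seqL x (N + 1) = seqL x N ++ [x (N + 1)] := by
  simp [seqL, List.range_succ]

theorem seqL_cons (x : ℕ → X) (N : ℕ) : seqL x (N + 1) = x 0 :: seqL (fun i => x (i + 1)) N := by
  rw [seqL, List.range_succ_eq_map]
  simp [seqL, Function.comp_def]

theorem seqL_head (x : ℕ → X) (N : ℕ) : ∃ r, seqL x N = x 0 :: r := by
  cases N with
  | zero => exact ⟨[], by simp [seqL]⟩
  | succ n => exact ⟨_, seqL_cons x n⟩

theorem seqL_chain {R : X → X → Prop} (x : ℕ → X) (N : ℕ) (h : ∀ i < N, R (x i) (x (i + 1))) :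
    (seqL x N).IsChain R := by
  rw [List.isChain_iff_getElem]
  intro i hi
  simp [seqL] at hi ⊢
  exact h i (by omega)

theorem seqL_good (x : ℕ → X) (N : ℕ) (hN : 0 < N) (h : ∀ i < N, (x i, x (i + 1)) ∈ E)
    (hx : x 0 = x N) : Good E (seqL x N) := by
  refine ⟨seqL_chain x N h, by simp [seqL]; omega, ?_⟩
  obtain ⟨M, rfl⟩ : ∃ M, N = M + 1 := ⟨N - 1, by omega⟩
  have h1 : (seqL x (M + 1)).getLast? = some (x (M + 1)) := by rw [seqL_succ]; simp
  rw [h1, seqL_cons]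
  simp [hx]

theorem lad (N : ℕ) : ∀ x y : ℕ → X, (∀ i < N, (x i, x (i + 1)) ∈ E) →
    (∀ i < N, (x i, y (i + 1)) ∈ E) → (∀ i ≤ N, (x i, y i) ∈ E) →
    EHomotopic E (x 0 :: seqL y N) (seqL x N ++ [y N]) := by
  induction N with
  | zero => intro x y _ _ _; simp [seqL]; exact .refl
  | succ N ih =>
    intro x y h1 h2 h3
    have := ih (fun i => x (i + 1)) (fun i => y (i + 1)) (fun i hi => h1 _ (by omega))
      (fun i hi => h2 _ (by omega)) (fun i hi => h3 _ (by omega))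
    rw [seqL_cons y, seqL_cons x]
    obtain ⟨r, hr⟩ := seqL_head (fun i => y (i + 1)) N
    refine .head (b := x 0 :: seqL (fun i => y (i + 1)) N) ?_
      (.head (b := x 0 :: x 1 :: seqL (fun i => y (i + 1)) N) ?_ ?_)
    · rw [hr]
      exact EStep.remove [] (x 0) (y 0) (y 1) r (h2 0 (by omega))
    · rw [hr]
      exact EStep.insert [] (x 0) (x 1) (y 1) r (h1 0 (by omega)) (h3 1 (by omega))
    · change EHomotopic E _ _
      have := EHom.ctx this [x 0] []
      simpa using this

theorem ladder (hsym : ∀ a b, (a, b) ∈ E → (b, a) ∈ E) (hrefl : ∀ a, (a, a) ∈ E)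
    (N : ℕ) (hN : 0 < N) (x y : ℕ → X) (h1 : ∀ i < N, (x i, x (i + 1)) ∈ E)
    (h1' : ∀ i < N, (y i, y (i + 1)) ∈ E)
    (h2 : ∀ i < N, (x i, y (i + 1)) ∈ E) (h3 : ∀ i ≤ N, (x i, y i) ∈ E)
    (hx : x 0 = x N) (hy : y 0 = y N) : FH E (seqL y N) (seqL x N) := by
  have gx := seqL_good x N hN h1 hx
  have gy := seqL_good y N hN h1' hy
  obtain ⟨r, hr⟩ := seqL_head y N
  have h0 : ([x 0] ++ seqL y N).IsChain (fun a b => (a, b) ∈ E) := by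
    rw [hr]
    have := gy.1
    rw [hr] at this
    simp only [List.singleton_append, List.isChain_cons_cons]
    exact ⟨h3 0 (by omega), this⟩
  obtain ⟨c1, c2⟩ := conj_many hsym [x 0] (seqL y N) gy h0
  refine c2.trans (EHom.fh ?_ c1)
  have hl := EHom.ctx (lad N x y h1 h2 h3) [] [x 0]
  have e : [x 0] ++ seqL y N ++ [x 0].reverse = [] ++ (x 0 :: seqL y N) ++ [x 0] := by simp
  rw [e]
  refine hl.trans ?_
  obtain ⟨M, rfl⟩ : ∃ M, N = M + 1 := ⟨N - 1, by omega⟩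
  have e2 : seqL x (M + 1) = (List.range M).map x ++ [x M, x (M + 1)] := by
    simp [seqL, List.range_succ]
  rw [e2, hx]
  have s1 : EStep E ((List.range M).map x ++ [x M] ++ x (M+1) :: y (M+1) :: x (M+1) :: [])
    ((List.range M).map x ++ [x M] ++ x (M+1) :: x (M+1) :: []) := EStep.remove _ _ _ _ _ (hrefl _)
  have s2 : EStep E ((List.range M).map x ++ x M :: x (M+1) :: x (M+1) :: [])
    ((List.range M).map x ++ x M :: x (M+1) :: []) := EStep.remove _ _ _ _ _ (h1 M (by omega))
  simp at s1 s2 ⊢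
  exact .head s1 (.single s2)

theorem sub_of_times {ε : ℝ} (hE : MetricEnt X ε ⊆ E) {f : ℝ → X} (t : ℕ → ℝ) (N : ℕ)
    (h0 : t 0 = 0) (h1 : t N = 1) (hmono : ∀ i < N, t i ≤ t (i + 1))
    (hs : ∀ i < N, ∀ s, t i ≤ s → s ≤ t (i + 1) →
      dist (f (t i)) (f s) < ε ∧ dist (f (t (i + 1))) (f s) < ε) :
    IsSubdivision E f (seqL (fun i => f (t i)) N) := by
  refine ⟨(List.range (N + 1)).map t, ?_, ?_, by simp [seqL, Function.comp_def], ⟨by simp [seqL], ?_⟩, ?_⟩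
  · rw [List.range_succ_eq_map]; simp [h0]
  · simp [List.range_succ, h1]
  · exact seqL_chain _ N (fun i hi => hE (hs i hi _ (hmono i hi) le_rfl).1)
  · change List.IsChain _ _
    rw [List.isChain_iff_getElem]
    intro i hi
    simp at hi ⊢
    exact ⟨hmono i (by omega), fun s h1 h2 => ⟨hE (hs i (by omega) s h1 h2).1,
      hE (hs i (by omega) s h1 h2).2⟩⟩

def Lip (L : ℝ) (g : ℝ → X) : Prop := ∀ s t, s ≤ t → dist (g s) (g t) ≤ L * (t - s)

theorem var_split (f : ℝ → X) {a b c : ℝ} (hab : a ≤ b) (hbc : b ≤ c) :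
    eVariationOn f (Icc a c) = eVariationOn f (Icc a b) + eVariationOn f (Icc b c) := by
  have := eVariationOn.Icc_add_Icc f (s := univ) hab hbc (mem_univ b)
  simpa using this.symm

theorem clamp_lip (d : ℝ) {s t : ℝ} (hst : s ≤ t) :
    max 0 (min d t) - max 0 (min d s) ≤ t - s := by
  simp only [max_def, min_def]
  split_ifs <;> linarith

theorem geod (hgeo : IsGeodesicSpace X) (p q : X) :
    ∃ g : ℝ → X, Lip 1 g ∧ g 0 = p ∧ g (dist p q) = q := by
  obtain ⟨f, hf, rfl, rfl, hv⟩ := hgeo p q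
  have three : ∀ a b, 0 ≤ a → a ≤ b → b ≤ 1 →
      dist (f 0) (f a) + dist (f a) (f b) + dist (f b) (f 1) ≤ dist (f 0) (f 1) := by
    intro a b h0 hab h1
    have e : eVariationOn f (Icc 0 1) = eVariationOn f (Icc 0 a) + eVariationOn f (Icc a b)
        + eVariationOn f (Icc b 1) := by
      rw [var_split f (h0.trans hab) h1, var_split f h0 hab]
    have i1 := eVariationOn.edist_le f (s := Icc 0 a) (x := 0) (y := a) (by simp [h0]) (by simp [h0])
    have i2 := eVariationOn.edist_le f (s := Icc a b) (x := a) (y := b) (by simp [hab]) (by simp [hab])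
    have i3 := eVariationOn.edist_le f (s := Icc b 1) (x := b) (y := 1) (by simp [h1]) (by simp [h1])
    have : edist (f 0) (f a) + edist (f a) (f b) + edist (f b) (f 1) ≤
        ENNReal.ofReal (dist (f 0) (f 1)) := by
      rw [← hv, e]
      gcongr
    rw [edist_dist, edist_dist, edist_dist, ← ENNReal.ofReal_add dist_nonneg dist_nonneg,
      ← ENNReal.ofReal_add (by positivity) dist_nonneg,
      ENNReal.ofReal_le_ofReal_iff dist_nonneg] at this
    exact this
  set d := dist (f 0) (f 1) with hd
  have hd0 : 0 ≤ d := dist_nonneg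
  have hex : ∀ s : ℝ, ∃ τ ∈ Icc (0:ℝ) 1, dist (f 0) (f τ) = max 0 (min d s) := by
    intro s
    have hc : ContinuousOn (fun t => dist (f 0) (f t)) (Icc 0 1) :=
      continuous_dist.comp_continuousOn (continuousOn_const.prodMk hf)
    have := intermediate_value_Icc (zero_le_one) hc
    have hm : max 0 (min d s) ∈ Icc (dist (f 0) (f 0)) (dist (f 0) (f 1)) := by
      simp [← hd, hd0]
    obtain ⟨τ, h1, h2⟩ := this hm
    exact ⟨τ, h1, h2⟩
  choose τ hτ hτd using hex
  refine ⟨fun s => f (τ s), ?_, ?_, ?_⟩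
  · intro s t hst
    have hle : max 0 (min d s) ≤ max 0 (min d t) := by gcongr
    have hlip := clamp_lip d hst
    have e1 := hτd s
    have e2 := hτd t
    change dist (f (τ s)) (f (τ t)) ≤ _
    rcases le_total (τ s) (τ t) with h | h
    · have := three _ _ (hτ s).1 h (hτ t).2
      have tri := dist_triangle (f 0) (f (τ t)) (f 1)
      linarith
    · have := three _ _ (hτ t).1 h (hτ s).2
      have tri := dist_triangle (f 0) (f (τ s)) (f 1)
      rw [dist_comm (f (τ t))] at this
      linarith
  · have := hτd 0
    simp [hd0] at this
    exact this.symm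
  · have e := hτd d
    simp [hd0] at e
    have := three (τ d) (τ d) (hτ d).1 le_rfl (hτ d).2
    rw [dist_self, e] at this
    have : dist (f (τ d)) (f 1) ≤ 0 := by linarith
    exact dist_le_zero.1 this

theorem string1 (hgeo : IsGeodesicSpace X) (x : ℕ → X) (n : ℕ) :
    ∃ h : ℝ → X, Lip 1 h ∧ ∀ i ≤ n, h (∑ j ∈ Finset.range i, dist (x j) (x (j + 1))) = x i := by
  induction n with
  | zero => exact ⟨fun _ => x 0, by intro s t hst; simp; exact hst, by simp⟩
  | succ n ih =>
    obtain ⟨h, hl, hh⟩ := ih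
    obtain ⟨g, gl, g0, g1⟩ := geod hgeo (x n) (x (n + 1))
    set S : ℕ → ℝ := fun i => ∑ j ∈ Finset.range i, dist (x j) (x (j + 1)) with hS
    have hSm : ∀ i, S i ≤ S (i + 1) := by
      intro i; simp [hS, Finset.sum_range_succ]
    have hSmono : Monotone S := monotone_nat_of_le_succ hSm
    refine ⟨fun s => if s ≤ S n then h s else g (s - S n), ?_, ?_⟩
    · intro s t hst
      dsimp only
      split_ifs with h1 h2 h2
      · exact hl s t hst
      · have a1 := hl s (S n) h1
        have a2 := gl 0 (t - S n) (by linarith)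
        rw [g0, ← hh n le_rfl] at a2
        have := dist_triangle (h s) (h (S n)) (g (t - S n))
        change dist (h (S n)) _ ≤ _ at a2
        linarith
      · exact absurd (hst.trans h2) h1
      · have := gl (s - S n) (t - S n) (by linarith)
        linarith
    · intro i hi
      change (if S i ≤ S n then h (S i) else g (S i - S n)) = x i
      rcases Nat.lt_or_ge n i with hni | hni
      · obtain rfl : i = n + 1 := by omega
        have e : S (n + 1) = S n + dist (x n) (x (n + 1)) := by simp [hS, Finset.sum_range_succ]
        split_ifs with h1
        · have : dist (x n) (x (n + 1)) = 0 := le_antisymm (by linarith) dist_nonneg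
          rw [e, this, add_zero]
          rw [dist_eq_zero] at this
          rw [← this]
          exact hh n le_rfl
        · rw [e, add_sub_cancel_left, g1]
      · rw [if_pos (hSmono hni)]
        exact hh i hni

theorem stringing (hgeo : IsGeodesicSpace X) {ε : ℝ} (hE : MetricEnt X ε ⊆ E) (x : ℕ → X) (N : ℕ)
    (hN : 0 < N) (hx : ∀ i < N, dist (x i) (x (i + 1)) < ε) :
    ∃ f : ℝ → X, Lip (∑ j ∈ Finset.range N, dist (x j) (x (j + 1))) f ∧ f 0 = x 0 ∧ f 1 = x N ∧
      IsSubdivision E f (seqL x N) := by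
  obtain ⟨h, hl, hh⟩ := string1 hgeo x N
  set S : ℕ → ℝ := fun i => ∑ j ∈ Finset.range i, dist (x j) (x (j + 1)) with hS
  have hSs : ∀ i, S (i + 1) = S i + dist (x i) (x (i + 1)) := by
    intro i; simp [hS, Finset.sum_range_succ]
  have hSmono : Monotone S := monotone_nat_of_le_succ (fun i => by rw [hSs]; linarith [dist_nonneg (x := x i) (y := x (i + 1))])
  have hS0 : S 0 = 0 := by simp [hS]
  have hSp : ∀ i, 0 ≤ S i := fun i => hS0 ▸ hSmono (Nat.zero_le i)
  change ∃ f : ℝ → X, Lip (S N) f ∧ _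
  set t : ℕ → ℝ := fun i => if i < N then S i / S N else 1 with ht
  have htS : ∀ i ≤ N, S N * t i = S i := by
    intro i hi
    by_cases h1 : i < N
    · simp only [ht, if_pos h1]
      by_cases h2 : S N = 0
      · rw [h2, zero_mul]; exact le_antisymm (hSp i) (h2 ▸ hSmono hi)
      · field_simp
    · obtain rfl : i = N := by omega
      simp [ht]
  have hfl : Lip (S N) (fun s => h (S N * s)) := by
    intro s u hsu
    have := hl (S N * s) (S N * u) (mul_le_mul_of_nonneg_left hsu (hSp N))
    dsimp only
    linarith
  have hft : ∀ i ≤ N, h (S N * t i) = x i := fun i hi => by rw [htS i hi]; exact hh i hi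
  refine ⟨fun s => h (S N * s), hfl, ?_, ?_, ?_⟩
  · have := hh 0 (Nat.zero_le _); simpa using this
  · have := hh N le_rfl; simpa using this
  · have e : seqL x N = seqL (fun i => (fun s => h (S N * s)) (t i)) N := by
      unfold seqL
      apply List.map_congr_left
      intro i hi
      exact (hft i (by simp at hi; omega)).symm
    rw [e]
    refine sub_of_times hE t N (by simp [ht, hN, hS0]) (by simp [ht]) ?_ ?_
    · intro i hi
      simp only [ht, if_pos hi]
      split_ifs with h1
      · exact div_le_div_of_nonneg_right (hSmono (Nat.le_succ i)) (hSp N)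
      · exact div_le_one_of_le₀ (hSmono hi.le) (hSp N)
    · intro i hi s h1 h2
      have a1 := hfl _ _ h1
      have a2 := hfl _ _ h2
      have b := htS i hi.le
      have b' := htS (i + 1) hi
      have b2 := hSs i
      have b3 := hx i hi
      have c1 := mul_le_mul_of_nonneg_left h1 (hSp N)
      have c2 := mul_le_mul_of_nonneg_left h2 (hSp N)
      constructor
      · linarith
      · rw [dist_comm]; linarith


theorem Lip.contOn {L : ℝ} {f : ℝ → X} (h : Lip L f) (hL : 0 ≤ L) : Continuous f := by
  have : LipschitzWith ⟨L, hL⟩ f := by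
    apply LipschitzWith.of_dist_le_mul
    intro s t
    rcases le_total s t with hst | hst
    · have := h s t hst
      rw [Real.dist_eq, abs_sub_comm, abs_of_nonneg (by linarith)]
      exact this
    · have := h t s hst
      rw [Real.dist_eq, abs_of_nonneg (by linarith), dist_comm]
      exact this
  exact this.continuous

theorem Lip.var {L : ℝ} {f : ℝ → X} (h : Lip L f) (hL : 0 ≤ L) {a b : ℝ} (hab : a ≤ b) :
    eVariationOn f (Icc a b) ≤ ENNReal.ofReal (L * (b - a)) := by
  apply iSup_le
  rintro ⟨n, u, hu, hus⟩
  calc ∑ i ∈ Finset.range n, edist (f (u (i + 1))) (f (u i))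
      ≤ ∑ i ∈ Finset.range n, ENNReal.ofReal (L * (u (i + 1) - u i)) := by
        apply Finset.sum_le_sum
        intro i _
        rw [edist_comm, edist_dist]
        exact ENNReal.ofReal_le_ofReal (h _ _ (hu (Nat.le_succ i)))
    _ = ENNReal.ofReal (∑ i ∈ Finset.range n, L * (u (i + 1) - u i)) := by
        rw [ENNReal.ofReal_sum_of_nonneg]
        intro i _
        exact mul_nonneg hL (sub_nonneg.2 (hu (Nat.le_succ i)))
    _ ≤ ENNReal.ofReal (L * (b - a)) := by
        apply ENNReal.ofReal_le_ofReal
        rw [← Finset.mul_sum, Finset.sum_range_sub]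
        apply mul_le_mul_of_nonneg_left _ hL
        have := (hus n).2
        have := (hus 0).1
        linarith

def Cls (E : Set (X × X)) (c : ℝ → X) : Set ℝ≥0∞ :=
  {L : ℝ≥0∞ | ∃ f : ℝ → X, ContinuousOn f (Set.Icc 0 1) ∧ f 0 = f 1 ∧
          CurveFreelyEHomotopic E f c ∧ eVariationOn f (Set.Icc 0 1) = L}

/-- curve in the class, from a chain -/
theorem chain_curve (hgeo : IsGeodesicSpace X) (hsym : ∀ a b, (a, b) ∈ E → (b, a) ∈ E)
    (hrefl : ∀ a, (a, a) ∈ E) {ε : ℝ} (hE : MetricEnt X ε ⊆ E) {c : ℝ → X}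
    (x : ℕ → X) (N : ℕ)
    (hN : 0 < N) (hx : ∀ i < N, dist (x i) (x (i + 1)) < ε) (hcl : x 0 = x N)
    {l : List X} (hl : IsSubdivision E c l) (hfh : FH E (seqL x N) l) :
    ∃ f : ℝ → X, Lip (∑ j ∈ Finset.range N, dist (x j) (x (j + 1))) f ∧ f 0 = f 1 ∧
      CurveFreelyEHomotopic E f c := by
  obtain ⟨f, h1, h2, h3, h4⟩ := stringing hgeo hE x N hN hx
  refine ⟨f, h1, by rw [h2, h3, hcl], _, l, h4, hl, ?_⟩
  exact freely_of_FH hsym hrefl (seqL_good x N hN (fun i hi => hE (hx i hi)) hcl) hfh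

theorem lemB (hgeo : IsGeodesicSpace X) (hsym : ∀ a b, (a, b) ∈ E → (b, a) ∈ E)
    (hrefl : ∀ a, (a, a) ∈ E) {ε : ℝ} (hE : MetricEnt X ε ⊆ E) {c : ℝ → X}
    (x : ℕ → X) (N : ℕ)
    (hN : 0 < N) (hx : ∀ i < N, dist (x i) (x (i + 1)) < ε) (hcl : x 0 = x N)
    {l : List X} (hl : IsSubdivision E c l) (hfh : FH E (seqL x N) l) :
    sInf (Cls E c) ≤ ENNReal.ofReal (∑ j ∈ Finset.range N, dist (x j) (x (j + 1))) := by
  obtain ⟨f, h1, h2, h3⟩ := chain_curve hgeo hsym hrefl hE x N hN hx hcl hl hfh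
  have h0 : 0 ≤ ∑ j ∈ Finset.range N, dist (x j) (x (j + 1)) :=
    Finset.sum_nonneg (fun _ _ => dist_nonneg)
  have hm : eVariationOn f (Icc 0 1) ∈ Cls E c := ⟨f, (h1.contOn h0).continuousOn, h2, h3, rfl⟩
  refine (sInf_le hm).trans ?_
  have := h1.var h0 (zero_le_one)
  simpa using this

theorem fine_sub {ε : ℝ} (hε : 0 < ε) (hE : MetricEnt X ε ⊆ E) {f : ℝ → X}
    (hf : ContinuousOn f (Icc 0 1)) :
    ∃ N : ℕ, 0 < N ∧ IsSubdivision E f (seqL (fun i : ℕ => f ((i:ℝ) / N)) N) ∧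
      ∀ i < N, dist (f ((i:ℝ) / N)) (f (((i + 1 : ℕ):ℝ) / N)) < ε := by
  obtain ⟨δ, hδ, h⟩ := unif_mod hf hε
  obtain ⟨K, hK⟩ := exists_nat_gt (1 / δ)
  have hKpos : (0:ℝ) < K := lt_trans (by positivity) hK
  have hKδ : 1 / (K:ℝ) < δ := by
    rw [div_lt_iff₀ hδ] at hK
    rw [div_lt_iff₀ hKpos]; linarith
  have key : ∀ i < K, ∀ s, (i:ℝ) / K ≤ s → s ≤ ((i + 1 : ℕ):ℝ) / K →
      dist (f ((i:ℝ) / K)) (f s) < ε ∧ dist (f (((i + 1 : ℕ):ℝ) / K)) (f s) < ε := by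
    intro i hi s h1 h2
    have e : ((i + 1 : ℕ):ℝ) / K = (i:ℝ) / K + 1 / K := by push_cast; ring
    have a0 : 0 ≤ (i:ℝ) / K := by positivity
    have a1 : ((i + 1 : ℕ):ℝ) / K ≤ 1 := by
      rw [div_le_one hKpos]; exact_mod_cast hi
    rw [e] at a1 h2 ⊢
    constructor
    · apply h _ ⟨a0, by linarith⟩ _ ⟨by linarith, by linarith⟩
      rw [abs_lt]; constructor <;> linarith
    · apply h _ ⟨by linarith, a1⟩ _ ⟨by linarith, by linarith⟩
      rw [abs_lt]; constructor <;> linarith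
  have hm : ∀ i < K, (i:ℝ) / K ≤ ((i + 1 : ℕ):ℝ) / K := by
    intro i _; gcongr; simp
  refine ⟨K, by exact_mod_cast hKpos, ?_, fun i hi => (key i hi _ (hm i hi) le_rfl).1⟩
  exact sub_of_times hE (fun i : ℕ => (i:ℝ) / K) K (by simp) (by field_simp) hm key

theorem inf_fin (hgeo : IsGeodesicSpace X) (hsym : ∀ a b, (a, b) ∈ E → (b, a) ∈ E)
    (hrefl : ∀ a, (a, a) ∈ E) {ε : ℝ} (hε : 0 < ε) (hE : MetricEnt X ε ⊆ E) {c : ℝ → X}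
    (hc : ContinuousOn c (Icc 0 1)) (hcl : c 0 = c 1) : sInf (Cls E c) ≠ ⊤ := by
  obtain ⟨N, hN, h1, h2⟩ := fine_sub hε hE hc
  have hN' : (N:ℝ) ≠ 0 := by positivity
  have := lemB hgeo hsym hrefl hE _ N hN h2 (by simp [hN', hcl]) h1 .refl
  exact ne_top_of_le_ne_top ENNReal.ofReal_ne_top this

/-- equal-length partition -/
theorem partition {f : ℝ → X} (hf : ContinuousOn f (Icc 0 1)) {V : ℝ} (hV0 : 0 ≤ V)
    (hV : eVariationOn f (Icc 0 1) ≤ ENNReal.ofReal V) (N : ℕ) (hN : 0 < N) :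
    ∃ t : ℕ → ℝ, t 0 = 0 ∧ t N = 1 ∧ (∀ i, t i ∈ Icc (0:ℝ) 1) ∧ Monotone t ∧
      ∀ i < N, ∀ s, t i ≤ s → s ≤ t (i + 1) → ∀ s', t i ≤ s' → s' ≤ t (i + 1) →
        dist (f s) (f s') ≤ V / N := by
  have hN' : (0:ℝ) < N := by exact_mod_cast hN
  set v : ℝ → ℝ := fun s => (eVariationOn f (Icc 0 s)).toReal with hv
  have hfin : ∀ s ≤ 1, eVariationOn f (Icc 0 s) ≠ ⊤ := fun s hs =>
    ne_top_of_le_ne_top ENNReal.ofReal_ne_top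
      ((eVariationOn.mono f (Icc_subset_Icc le_rfl hs)).trans hV)
  have hvd : ∀ a b, 0 ≤ a → a ≤ b → b ≤ 1 → dist (f a) (f b) ≤ v b - v a := by
    intro a b h0 hab h1
    have e := var_split f h0 hab
    have i2 := eVariationOn.edist_le f (s := Icc a b) (x := a) (y := b) (by simp [hab]) (by simp [hab])
    have : eVariationOn f (Icc 0 a) + edist (f a) (f b) ≤ eVariationOn f (Icc 0 b) := by
      rw [e]; gcongr
    have := ENNReal.toReal_mono (hfin b h1) this
    rw [ENNReal.toReal_add (hfin a (hab.trans h1)) (edist_ne_top _ _), edist_dist,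
      ENNReal.toReal_ofReal dist_nonneg] at this
    simp only [hv]; linarith
  have hvmono : ∀ a b, 0 ≤ a → a ≤ b → b ≤ 1 → v a ≤ v b := by
    intro a b h0 hab h1
    linarith [hvd a b h0 hab h1, dist_nonneg (x := f a) (y := f b)]
  have hv1 : v 1 ≤ V := by
    have := ENNReal.toReal_mono ENNReal.ofReal_ne_top hV
    rwa [ENNReal.toReal_ofReal hV0] at this
  have hv0 : v 0 = 0 := by
    simp [hv]
  set A : ℕ → Set ℝ := fun i => {s | s ∈ Icc (0:ℝ) 1 ∧ v s ≤ i * V / N} with hA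
  have hAne : ∀ i, (0:ℝ) ∈ A i := by
    intro i
    refine ⟨by simp, ?_⟩
    rw [hv0]; positivity
  have hAb : ∀ i, BddAbove (A i) := fun i => ⟨1, fun s hs => hs.1.2⟩
  have hAi : ∀ i, sSup (A i) ∈ Icc (0:ℝ) 1 := fun i =>
    ⟨le_csSup (hAb i) (hAne i), csSup_le ⟨0, hAne i⟩ (fun s hs => hs.1.2)⟩
  set t : ℕ → ℝ := fun i => if i = 0 then 0 else sSup (A i) with ht
  have htI : ∀ i, t i ∈ Icc (0:ℝ) 1 := by
    intro i
    simp only [ht]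
    split_ifs
    · simp
    · exact hAi i
  have htm : Monotone t := by
    apply monotone_nat_of_le_succ
    intro i
    by_cases h : i = 0
    · simp only [ht, if_pos h, if_neg (Nat.succ_ne_zero i)]
      exact (hAi _).1
    · simp only [ht, if_neg h, if_neg (Nat.succ_ne_zero i)]
      apply csSup_le_csSup (hAb _) ⟨0, hAne i⟩
      intro s hs
      refine ⟨hs.1, hs.2.trans ?_⟩
      gcongr
      simp
  refine ⟨t, by simp [ht], ?_, htI, htm, ?_⟩
  · simp only [ht, if_neg hN.ne']
    apply le_antisymm (hAi N).2
    apply le_csSup (hAb N)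
    refine ⟨by simp, ?_⟩
    rw [mul_div_assoc, mul_div_cancel₀ _ hN'.ne']
    exact hv1
  · intro i hi
    -- interior points
    have hlow : ∀ s, t i < s → s ≤ 1 → i * V / N ≤ v s := by
      intro s h1 h2
      have hs0 : 0 ≤ s := (htI i).1.trans h1.le
      by_cases h : i = 0
      · simp [h, hv]
      · by_contra hcon
        push Not at hcon
        have : s ≤ sSup (A i) := le_csSup (hAb i) ⟨⟨hs0, h2⟩, hcon.le⟩
        simp only [ht, if_neg h] at h1
        linarith
    have hup : ∀ s, 0 ≤ s → s < t (i + 1) → v s ≤ ((i + 1 : ℕ):ℝ) * V / N := by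
      intro s h1 h2
      simp only [ht, if_neg (Nat.succ_ne_zero i)] at h2
      obtain ⟨r, hr, hsr⟩ := exists_lt_of_lt_csSup ⟨0, hAne _⟩ h2
      exact (hvmono s r h1 hsr.le hr.1.2).trans hr.2
    have e : ((i + 1 : ℕ):ℝ) * V / N - i * V / N = V / N := by push_cast; ring
    have hint : ∀ s ∈ Ioo (t i) (t (i + 1)), ∀ s' ∈ Ioo (t i) (t (i + 1)),
        dist (f s) (f s') ≤ V / N := by
      have main : ∀ s ∈ Ioo (t i) (t (i + 1)), ∀ s' ∈ Ioo (t i) (t (i + 1)), s ≤ s' →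
        dist (f s) (f s') ≤ V / N := by
        intro s hs s' hs' hss
        have := hvd s s' ((htI i).1.trans hs.1.le) hss (hs'.2.le.trans (htI _).2)
        have a1 := hlow s hs.1 (hs.2.le.trans (htI _).2)
        have a2 := hup s' ((htI i).1.trans hs'.1.le) hs'.2
        linarith
      intro s hs s' hs'
      rcases le_total s s' with h | h
      · exact main s hs s' hs' h
      · rw [dist_comm]; exact main s' hs' s hs h
    intro s h1 h2 s' h1' h2'
    rcases (htm (Nat.le_succ i)).eq_or_lt with heq | hlt
    · have : s = s' := by
        have a : t i = t (i + 1) := heq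
        linarith
      rw [this, dist_self]; positivity
    · change t i < t (i + 1) at hlt
      have hcl : closure (Ioo (t i) (t (i + 1))) = Icc (t i) (t (i + 1)) := closure_Ioo hlt.ne
      have hsub : Icc (t i) (t (i + 1)) ⊆ Icc 0 1 := Icc_subset_Icc (htI i).1 (htI _).2
      have hcon : ContinuousOn f (closure (Ioo (t i) (t (i + 1)))) := by
        rw [hcl]; exact hf.mono hsub
      have himg : MapsTo f (closure (Ioo (t i) (t (i + 1)))) (closure (f '' Ioo (t i) (t (i + 1)))) :=
        fun y hy => hcon.image_closure ⟨y, hy, rfl⟩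
      have m1 := himg (x := s) (by rw [hcl]; exact ⟨h1, h2⟩)
      have m2 := himg (x := s') (by rw [hcl]; exact ⟨h1', h2'⟩)
      have hcd : IsClosed {p : X × X | dist p.1 p.2 ≤ V / N} :=
        isClosed_le continuous_dist continuous_const
      have : (f s, f s') ∈ closure ((f '' Ioo (t i) (t (i + 1))) ×ˢ (f '' Ioo (t i) (t (i + 1)))) := by
        rw [closure_prod_eq]; exact ⟨m1, m2⟩
      have hss : ((f '' Ioo (t i) (t (i + 1))) ×ˢ (f '' Ioo (t i) (t (i + 1)))) ⊆
          {p : X × X | dist p.1 p.2 ≤ V / N} := by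
        rintro ⟨p, q⟩ ⟨⟨a, ha, rfl⟩, ⟨b, hb, rfl⟩⟩
        exact hint a ha b hb
      exact (closure_minimal hss hcd) this

theorem cls_fh (hsym : ∀ a b, (a, b) ∈ E → (b, a) ∈ E) {ε : ℝ} (hε : 0 < ε)
    (hE : MetricEnt X ε ⊆ E) {f c : ℝ → X} (hf : ContinuousOn f (Icc 0 1)) (hfcl : f 0 = f 1)
    (hc : ContinuousOn c (Icc 0 1)) (hcl : c 0 = c 1) (h : CurveFreelyEHomotopic E f c)
    {l l' : List X} (hl : IsSubdivision E f l) (hl' : IsSubdivision E c l') : FH E l l' := by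
  obtain ⟨m, m', h1, h2, h3⟩ := h
  exact (sub_equiv hsym hε hE hf hfcl hl h1).trans
    ((FH_of_freely hsym (sub_good hfcl h1) (sub_good hcl h2) h3).trans
      (sub_equiv hsym hε hE hc hcl h2 hl'))

theorem approx (hsym : ∀ a b, (a, b) ∈ E → (b, a) ∈ E) {ε : ℝ} (hε : 0 < ε)
    (hE : MetricEnt X ε ⊆ E) {f c : ℝ → X} (hf : ContinuousOn f (Icc 0 1)) (hfcl : f 0 = f 1)
    (hc : ContinuousOn c (Icc 0 1)) (hcl : c 0 = c 1) (h : CurveFreelyEHomotopic E f c)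
    {l' : List X} (hl' : IsSubdivision E c l') {V : ℝ} (hV0 : 0 ≤ V)
    (hV : eVariationOn f (Icc 0 1) ≤ ENNReal.ofReal V) (N : ℕ) (hN : 0 < N) (hVN : V / N < ε) :
    ∃ x : ℕ → X, x 0 = x N ∧ (∀ i < N, dist (x i) (x (i + 1)) ≤ V / N) ∧
      ∑ j ∈ Finset.range N, dist (x j) (x (j + 1)) ≤ V ∧ FH E (seqL x N) l' := by
  obtain ⟨t, t0, t1, tI, tm, ht⟩ := partition hf hV0 hV N hN
  have hle : ∀ i, t i ≤ t (i + 1) := fun i => tm (Nat.le_succ i)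
  refine ⟨fun i => f (t i), by simp [t0, t1, hfcl], ?_, ?_, ?_⟩
  · intro i hi
    exact ht i hi _ le_rfl (hle i) _ (hle i) le_rfl
  · have := eVariationOn.sum_le (f := f) (s := Icc 0 1) (n := N) tm tI
    have := this.trans hV
    have e : ∑ i ∈ Finset.range N, edist (f (t (i + 1))) (f (t i)) =
        ENNReal.ofReal (∑ j ∈ Finset.range N, dist (f (t j)) (f (t (j + 1)))) := by
      rw [ENNReal.ofReal_sum_of_nonneg (fun _ _ => dist_nonneg)]
      apply Finset.sum_congr rfl
      intro i _
      rw [edist_comm, edist_dist]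
    rw [e, ENNReal.ofReal_le_ofReal_iff hV0] at this
    exact this
  · refine cls_fh hsym hε hE hf hfcl hc hcl h ?_ hl'
    apply sub_of_times hE t N t0 t1 (fun i _ => hle i)
    intro i hi s h1 h2
    exact ⟨(ht i hi _ le_rfl (hle i) s h1 h2).trans_lt hVN,
      (ht i hi _ (hle i) le_rfl s h1 h2).trans_lt hVN⟩

theorem part1 [CompactSpace X] (hgeo : IsGeodesicSpace X)
    (hsym : ∀ a b, (a, b) ∈ E → (b, a) ∈ E)
    (hrefl : ∀ a, (a, a) ∈ E) {ε : ℝ} (hε : 0 < ε) (hE : MetricEnt X ε ⊆ E) {c : ℝ → X}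
    (hc : ContinuousOn c (Icc 0 1)) (hcl : c 0 = c 1) :
    ∃ cbar : ℝ → X, ContinuousOn cbar (Set.Icc 0 1) ∧ cbar 0 = cbar 1 ∧
      PropToArclength cbar ∧ CurveFreelyEHomotopic E cbar c ∧
      eVariationOn cbar (Set.Icc 0 1) = sInf (Cls E c) := by
  have hI := inf_fin hgeo hsym hrefl hε hE hc hcl
  set I := (sInf (Cls E c)).toReal with hIdef
  have hI' : sInf (Cls E c) = ENNReal.ofReal I := (ENNReal.ofReal_toReal hI).symm
  have hI0 : 0 ≤ I := ENNReal.toReal_nonneg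
  obtain ⟨N₀, -, hl₀, -⟩ := fine_sub hε hE hc
  set l₀ := seqL (fun i : ℕ => c ((i:ℝ) / N₀)) N₀ with hl0
  obtain ⟨N, hN⟩ := exists_nat_gt (max 0 ((I + 1) / (ε / 3)))
  have hN0 : (0:ℝ) < N := (le_max_left _ _).trans_lt hN
  have hNpos : 0 < N := by exact_mod_cast hN0
  have hNε : (I + 1) / N < ε / 3 := by
    have := (le_max_right _ _).trans_lt hN
    rw [div_lt_iff₀ (by positivity)] at this
    rw [div_lt_iff₀ hN0]; linarith
  have hex : ∀ n : ℕ, ∃ x : ℕ → X, x 0 = x N ∧ (∀ i < N, dist (x i) (x (i + 1)) ≤ (I + 1) / N) ∧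
      ∑ j ∈ Finset.range N, dist (x j) (x (j + 1)) ≤ I + 1 / ((n:ℝ) + 1) ∧
      FH E (seqL x N) l₀ := by
    intro n
    have hn : (0:ℝ) < 1 / ((n:ℝ) + 1) := by positivity
    have hn1 : 1 / ((n:ℝ) + 1) ≤ 1 := by
      rw [div_le_one (by positivity)]; linarith [Nat.cast_nonneg (α := ℝ) n]
    have hlt : sInf (Cls E c) < ENNReal.ofReal (I + 1 / ((n:ℝ) + 1)) := by
      rw [hI', ENNReal.ofReal_lt_ofReal_iff (by positivity)]
      linarith
    obtain ⟨L, ⟨f, h1, h2, h3, rfl⟩, hL⟩ := sInf_lt_iff.1 hlt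
    have hdiv : (I + 1 / ((n:ℝ) + 1)) / N ≤ (I + 1) / N := by gcongr
    obtain ⟨x, a1, a2, a3, a4⟩ := approx hsym hε hE h1 h2 hc hcl h3 hl₀ (by positivity) hL.le N
      hNpos (by linarith)
    exact ⟨x, a1, fun i hi => (a2 i hi).trans hdiv, a3, a4⟩
  choose x hx1 hx2 hx3 hx4 using hex
  obtain ⟨y, φ, hφ, hy⟩ := CompactSpace.tendsto_subseq x
  have hyi : ∀ i, Tendsto (fun n => x (φ n) i) atTop (𝓝 (y i)) := fun i =>
    (tendsto_pi_nhds.1 hy) i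
  have hyd : ∀ i, Tendsto (fun n => dist (x (φ n) i) (x (φ n) (i + 1))) atTop
      (𝓝 (dist (y i) (y (i + 1)))) := fun i => (hyi i).dist (hyi (i + 1))
  have y1 : y 0 = y N := by
    refine tendsto_nhds_unique (hyi 0) ?_
    refine (hyi N).congr (fun n => (hx1 _).symm)
  have y2 : ∀ i < N, dist (y i) (y (i + 1)) ≤ (I + 1) / N := fun i hi =>
    le_of_tendsto (hyd i) (Eventually.of_forall (fun n => hx2 _ i hi))
  have y3 : ∑ j ∈ Finset.range N, dist (y j) (y (j + 1)) ≤ I := by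
    have t1 : Tendsto (fun n => ∑ j ∈ Finset.range N, dist (x (φ n) j) (x (φ n) (j + 1))) atTop
      (𝓝 (∑ j ∈ Finset.range N, dist (y j) (y (j + 1)))) := tendsto_finset_sum _ (fun i _ => hyd i)
    have t2 : Tendsto (fun n => I + 1 / ((φ n : ℝ) + 1)) atTop (𝓝 (I + 0)) :=
      tendsto_const_nhds.add ((tendsto_one_div_add_atTop_nhds_zero_nat (𝕜 := ℝ)).comp hφ.tendsto_atTop)
    rw [add_zero] at t2
    exact le_of_tendsto_of_tendsto' t1 t2 (fun n => hx3 _)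
  have hev : ∀ᶠ n in atTop, ∀ i ∈ Finset.range (N + 1), dist (x (φ n) i) (y i) < ε / 3 := by
    rw [Filter.eventually_all_finset]
    intro i _
    exact (hyi i).eventually (Metric.ball_mem_nhds (y i) (by positivity))
  obtain ⟨n, hn⟩ := hev.exists
  have hn' : ∀ i ≤ N, dist (y i) (x (φ n) i) < ε / 3 := fun i hi => by
    rw [dist_comm]; exact hn i (by simp; omega)
  have hfh : FH E (seqL y N) l₀ := by
    refine FH.trans (FH.symm (ladder hsym hrefl N hNpos y (x (φ n)) ?_ ?_ ?_ ?_ y1 (hx1 _)))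
      (hx4 (φ n))
    · intro i hi; exact hE (show dist _ _ < ε by linarith [y2 i hi])
    · intro i hi; exact hE (show dist _ _ < ε by linarith [hx2 (φ n) i hi])
    · intro i hi
      refine hE (show dist _ _ < ε from ?_)
      linarith [y2 i hi, hn' (i + 1) hi, dist_triangle (y i) (y (i + 1)) (x (φ n) (i + 1))]
    · intro i hi; exact hE (show dist _ _ < ε by linarith [hn' i hi])
  obtain ⟨f, f1, f2, f3⟩ := chain_curve hgeo hsym hrefl hE y N hNpos
    (fun i hi => by linarith [y2 i hi]) y1 hl₀ hfh
  set L := ∑ j ∈ Finset.range N, dist (y j) (y (j + 1)) with hL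
  have hL0 : 0 ≤ L := Finset.sum_nonneg (fun _ _ => dist_nonneg)
  have hfc := (f1.contOn hL0).continuousOn (s := Icc 0 1)
  have hmem : eVariationOn f (Icc 0 1) ∈ Cls E c := ⟨f, hfc, f2, f3, rfl⟩
  have v1 : eVariationOn f (Icc 0 1) ≤ ENNReal.ofReal L := by
    simpa using f1.var hL0 zero_le_one
  have v2 : sInf (Cls E c) ≤ eVariationOn f (Icc 0 1) := sInf_le hmem
  have hLI : L = I := by
    apply le_antisymm y3
    have := v2.trans v1
    rwa [hI', ENNReal.ofReal_le_ofReal_iff hL0] at this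
  have v3 : eVariationOn f (Icc 0 1) = ENNReal.ofReal L := by
    apply le_antisymm v1
    rw [hLI, ← hI']; exact v2
  refine ⟨f, hfc, f2, ?_, f3, by rw [v3, hLI, hI']⟩
  intro t ht
  have e := var_split f ht.1 ht.2
  have b1 := f1.var hL0 ht.1
  have b2 := f1.var hL0 ht.2
  rw [v3] at e
  rw [v3, ← ENNReal.ofReal_mul ht.1]
  rw [sub_zero, mul_comm] at b1
  apply le_antisymm b1
  have n1 : eVariationOn f (Icc 0 t) ≠ ⊤ := ne_top_of_le_ne_top ENNReal.ofReal_ne_top b1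
  have n2 : eVariationOn f (Icc t 1) ≠ ⊤ := ne_top_of_le_ne_top ENNReal.ofReal_ne_top b2
  apply ENNReal.ofReal_le_of_le_toReal
  have b3 := ENNReal.toReal_mono ENNReal.ofReal_ne_top b2
  rw [ENNReal.toReal_ofReal (mul_nonneg hL0 (by linarith [ht.2]))] at b3
  have e' := congrArg ENNReal.toReal e
  rw [ENNReal.toReal_add n1 n2, ENNReal.toReal_ofReal hL0] at e'
  nlinarith

theorem const_sub (hrefl : ∀ a, (a, a) ∈ E) (f : ℝ → X) (x : X)
    (h : ∀ t ∈ Icc (0:ℝ) 1, f t = x) : IsSubdivision E f [x, x] := by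
  have h0 := h 0 (by simp)
  have h1 := h 1 (by simp)
  refine ⟨[0, 1], by simp, by simp, by simp [h0, h1], ⟨by simp, ?_⟩, ?_⟩
  · change List.IsChain _ _
    simpa using hrefl x
  · change List.IsChain _ _
    simp only [List.isChain_cons_cons, List.isChain_singleton, and_true, zero_le_one, true_and]
    intro s a b
    rw [h s ⟨a, b⟩, h0, h1]
    exact ⟨hrefl x, hrefl x⟩

theorem part2 (hsym : ∀ a b, (a, b) ∈ E → (b, a) ∈ E)
    (hrefl : ∀ a, (a, a) ∈ E) {ε : ℝ} (hε : 0 < ε) (hE : MetricEnt X ε ⊆ E) {c : ℝ → X}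
    (hc : ContinuousOn c (Icc 0 1)) (hcl : c 0 = c 1) {cbar : ℝ → X}
    (hb : ContinuousOn cbar (Icc 0 1)) (hbcl : cbar 0 = cbar 1)
    (hbc : CurveFreelyEHomotopic E cbar c)
    (hv : eVariationOn cbar (Set.Icc 0 1) = sInf (Cls E c)) :
    (∃ s ∈ Set.Icc (0:ℝ) 1, ∃ t ∈ Set.Icc (0:ℝ) 1, cbar s ≠ cbar t) ↔
          ¬ ∃ l : List X, IsSubdivision E c l ∧ ∃ x : X, FreelyEHomotopic E l [x] := by
  rw [← not_iff_not, not_not]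
  constructor
  · intro h
    push Not at h
    have h1 := const_sub hrefl cbar (cbar 0) (fun t ht => h t ht 0 (by simp))
    obtain ⟨N₀, -, hl₀, -⟩ := fine_sub hε hE hc
    refine ⟨_, hl₀, cbar 0, ?_⟩
    exact freely_const_of_FH hsym hrefl (sub_good hcl hl₀)
      (cls_fh hsym hε hE hb hbcl hc hcl hbc h1 hl₀).symm
  · rintro ⟨l, hl, x, hx⟩
    have hfh := FH_of_freely_const hsym hrefl (sub_good hcl hl) hx
    have hs := const_sub hrefl (fun _ => x) x (fun _ _ => rfl)
    have hmem : eVariationOn (fun _ : ℝ => x) (Icc 0 1) ∈ Cls E c :=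
      ⟨fun _ => x, continuousOn_const, rfl, ⟨_, l, hs, hl,
        freely_of_FH hsym hrefl (sub_good rfl hs) hfh.symm⟩, rfl⟩
    have hz : eVariationOn (fun _ : ℝ => x) (Icc 0 1) = 0 := by
      rw [eVariationOn.eq_zero_iff]
      intros; simp
    have : eVariationOn cbar (Icc 0 1) = 0 := by
      refine le_antisymm ?_ bot_le
      rw [hv, ← hz]; exact sInf_le hmem
    rw [eVariationOn.eq_zero_iff] at this
    push Not
    intro s hs t ht
    exact edist_eq_zero.1 (this s hs t ht)

theorem seqL_congr {x y : ℕ → X} {N : ℕ} (h : ∀ i ≤ N, x i = y i) : seqL x N = seqL y N := by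
  unfold seqL
  apply List.map_congr_left
  intro i hi
  exact h i (by simp at hi; omega)

theorem Lip.comp_add {L : ℝ} {g : ℝ → X} (h : Lip L g) (s : ℝ) : Lip L (fun t => g (s + t)) := by
  intro a b hab
  have := h (s + a) (s + b) (by linarith)
  dsimp only
  linarith

/-- subdivisions of Lipschitz curves -/
theorem Lip.sub {ε : ℝ} (hE : MetricEnt X ε ⊆ E) {L : ℝ} (hL : 0 ≤ L) {f : ℝ → X} (h : Lip L f)
    (t : ℕ → ℝ) (N : ℕ) (h0 : t 0 = 0) (h1 : t N = 1) (hmono : ∀ i < N, t i ≤ t (i + 1))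
    (hs : ∀ i < N, L * (t (i + 1) - t i) < ε) :
    IsSubdivision E f (seqL (fun i => f (t i)) N) := by
  refine sub_of_times hE t N h0 h1 hmono ?_
  intro i hi s a b
  have e1 := h _ _ a
  have e2 := h _ _ b
  have e3 := hs i hi
  have c1 := mul_le_mul_of_nonneg_left a hL
  have c2 := mul_le_mul_of_nonneg_left b hL
  constructor
  · linarith
  · rw [dist_comm]; linarith

theorem Lip.sub_unif {ε : ℝ} (hE : MetricEnt X ε ⊆ E) {L : ℝ} (hL : 0 ≤ L) {f : ℝ → X}
    (h : Lip L f) (N : ℕ) (hN : 0 < N) (hLN : L / N < ε) :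
    IsSubdivision E f (seqL (fun i : ℕ => f ((i:ℝ) / N)) N) := by
  have hN' : (0:ℝ) < N := by exact_mod_cast hN
  refine h.sub hE hL (fun i : ℕ => (i:ℝ) / N) N (by simp) (by field_simp) ?_ ?_
  · intro i _; gcongr; simp
  · intro i _
    have : L * (((i + 1 : ℕ):ℝ) / N - (i:ℝ) / N) = L / N := by push_cast; ring
    rw [this]; exact hLN

theorem rot_step (hsym : ∀ a b, (a, b) ∈ E → (b, a) ∈ E)
    (hrefl : ∀ a, (a, a) ∈ E) {ε : ℝ} (hE : MetricEnt X ε ⊆ E) {L : ℝ} (hL : 0 ≤ L) {g : ℝ → X}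
    (h : Lip L g) (hper : ∀ (u : ℝ) (n : ℤ), g (u + n) = g u) (N : ℕ) (hN : 0 < N)
    (hLN : L / N < ε / 3) (s δ : ℝ) (hδ : 0 ≤ δ) (hLδ : L * δ < ε / 3) :
    FH E (seqL (fun i : ℕ => g (s + δ + (i:ℝ) / N)) N) (seqL (fun i : ℕ => g (s + (i:ℝ) / N)) N) := by
  have hN' : (0:ℝ) < N := by exact_mod_cast hN
  have hp : ∀ r : ℝ, g (r + ((0:ℕ):ℝ) / N) = g (r + (N:ℝ) / N) := by
    intro r
    have := hper r 1
    rw [div_self hN'.ne']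
    simpa using this.symm
  have hdn : 0 ≤ (1:ℝ) / N := by positivity
  have hLδ0 : 0 ≤ L * δ := by positivity
  have hLN0 : 0 ≤ L / N := by positivity
  have e1 : ∀ i : ℕ, ((i + 1 : ℕ):ℝ) / N = (i:ℝ) / N + 1 / N := by intro i; push_cast; ring
  have e2 : L * (1 / N) = L / N := by ring
  refine ladder hsym hrefl N hN _ _ ?_ ?_ ?_ ?_ (hp _) (hp _)
  · intro i hi
    refine hE (show dist _ _ < ε from ?_)
    have := h (s + (i:ℝ) / N) (s + ((i + 1 : ℕ):ℝ) / N) (by rw [e1]; linarith)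
    rw [e1] at this ⊢
    nlinarith
  · intro i hi
    refine hE (show dist _ _ < ε from ?_)
    have := h (s + δ + (i:ℝ) / N) (s + δ + ((i + 1 : ℕ):ℝ) / N) (by rw [e1]; linarith)
    rw [e1] at this ⊢
    nlinarith
  · intro i hi
    refine hE (show dist _ _ < ε from ?_)
    have := h (s + (i:ℝ) / N) (s + δ + ((i + 1 : ℕ):ℝ) / N) (by rw [e1]; linarith)
    rw [e1] at this ⊢
    nlinarith
  · intro i hi
    refine hE (show dist _ _ < ε from ?_)
    have := h (s + (i:ℝ) / N) (s + δ + (i:ℝ) / N) (by linarith)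
    nlinarith

theorem rot (hsym : ∀ a b, (a, b) ∈ E → (b, a) ∈ E)
    (hrefl : ∀ a, (a, a) ∈ E) {ε : ℝ} (hε : 0 < ε) (hE : MetricEnt X ε ⊆ E) {L : ℝ} (hL : 0 ≤ L)
    {g : ℝ → X} (h : Lip L g) (hper : ∀ (u : ℝ) (n : ℤ), g (u + n) = g u) (N : ℕ) (hN : 0 < N)
    (hLN : L / N < ε / 3) (s : ℝ) (hs : 0 ≤ s) :
    FH E (seqL (fun i : ℕ => g (s + (i:ℝ) / N)) N) (seqL (fun i : ℕ => g (0 + (i:ℝ) / N)) N) := by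
  obtain ⟨k, hk⟩ := exists_nat_gt (L * s / (ε / 3))
  have hk0 : (0:ℝ) < k := lt_of_le_of_lt (by positivity) hk
  have hLδ : L * (s / k) < ε / 3 := by
    rw [div_lt_iff₀ (by positivity)] at hk
    rw [← mul_div_assoc, div_lt_iff₀ hk0]; linarith
  have key : ∀ j : ℕ, FH E (seqL (fun i : ℕ => g (j * (s / k) + (i:ℝ) / N)) N)
      (seqL (fun i : ℕ => g (0 + (i:ℝ) / N)) N) := by
    intro j
    induction j with
    | zero =>
      have : ((0:ℕ):ℝ) * (s / k) = 0 := by simp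
      rw [this]
      exact .refl
    | succ j ih =>
      have := rot_step hsym hrefl hE hL h hper N hN hLN (j * (s / k)) (s / k) (by positivity) hLδ
      have e : ((j + 1 : ℕ):ℝ) * (s / k) = j * (s / k) + s / k := by push_cast; ring
      rw [e]
      exact this.trans ih
  have := key k
  rwa [mul_div_cancel₀ _ hk0.ne'] at this

theorem rot_all (hsym : ∀ a b, (a, b) ∈ E → (b, a) ∈ E)
    (hrefl : ∀ a, (a, a) ∈ E) {ε : ℝ} (hε : 0 < ε) (hE : MetricEnt X ε ⊆ E) {L : ℝ} (hL : 0 ≤ L)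
    {g : ℝ → X} (h : Lip L g) (hper : ∀ (u : ℝ) (n : ℤ), g (u + n) = g u) (s : ℝ) (hs : 0 ≤ s)
    {m m' : List X} (hm : IsSubdivision E (fun t => g (s + t)) m)
    (hm' : IsSubdivision E (fun t => g (0 + t)) m') : FH E m m' := by
  obtain ⟨N, hN⟩ := exists_nat_gt (max 0 (L / (ε / 3)))
  have hN0 : (0:ℝ) < N := (le_max_left _ _).trans_lt hN
  have hNpos : 0 < N := by exact_mod_cast hN0
  have hNε : L / N < ε / 3 := by
    have := (le_max_right _ _).trans_lt hN
    rw [div_lt_iff₀ (by positivity)] at this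
    rw [div_lt_iff₀ hN0]; linarith
  have hcl : ∀ s : ℝ, g (s + 0) = g (s + 1) := by
    intro s
    have := hper s 1
    simpa using this.symm
  have r := rot hsym hrefl hε hE hL h hper N hNpos hNε s hs
  have hcon : ∀ s : ℝ, ContinuousOn (fun t => g (s + t)) (Icc 0 1) := fun s =>
    ((h.comp_add s).contOn hL).continuousOn
  exact (sub_equiv hsym hε hE (hcon s) (hcl s) hm
      ((h.comp_add s).sub_unif hE hL N hNpos (by linarith))).trans
    (r.trans (sub_equiv hsym hε hE (hcon 0) (hcl 0)
      ((h.comp_add 0).sub_unif hE hL N hNpos (by linarith)) hm'))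

theorem L_large (hgeo : IsGeodesicSpace X) (hsym : ∀ a b, (a, b) ∈ E → (b, a) ∈ E)
    (hrefl : ∀ a, (a, a) ∈ E) {ε : ℝ} (hε : 0 < ε) (hE : MetricEnt X ε ⊆ E) {L : ℝ} (hL : 0 < L)
    {g : ℝ → X} (h : Lip L g) (hper : ∀ (u : ℝ) (n : ℤ), g (u + n) = g u)
    {c : ℝ → X} {l : List X} (hl : IsSubdivision E c l)
    (hg : ∀ m, IsSubdivision E (fun t => g (0 + t)) m → FH E m l)
    (hI : sInf (Cls E c) = ENNReal.ofReal L) : 3 * ε ≤ L := by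
  by_contra hcon
  push Not at hcon
  have hs := (h.comp_add 0).sub_unif hE hL.le 3 (by norm_num) (by push_cast; linarith)
  have h1 := hg _ hs
  have hp : g 1 = g 0 := by
    have := hper 0 1
    simpa using this
  have hcl : (fun t => g (0 + t)) 0 = (fun t => g (0 + t)) 1 := by simp [hp]
  have hgd := sub_good hcl hs
  have e : seqL (fun i : ℕ => (fun t => g (0 + t)) ((i:ℝ) / (3:ℕ))) 3 =
      [g 0, g (1 / 3), g (2 / 3), g 0] := by
    simp [seqL, List.range_succ, hp]
  rw [e] at h1 hgd
  have hv : (g 0, g (2 / 3)) ∈ E := by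
    refine hE (show dist _ _ < ε from ?_)
    have := h (2 / 3) 1 (by norm_num)
    rw [hp, dist_comm] at this
    linarith
  have s1 : EStep E [g 0, g (1 / 3), g (2 / 3), g 0] [g 0, g (2 / 3), g 0] :=
    EStep.remove [] _ _ _ _ hv
  have s2 : EStep E [g 0, g (2 / 3), g 0] [g 0, g 0] :=
    EStep.remove [] _ _ _ _ (hrefl _)
  have hh : EHomotopic E [g 0, g (1 / 3), g (2 / 3), g 0] [g 0, g 0] := .head s1 (.single s2)
  have h2 : FH E (seqL (fun _ => g 0) 1) l := by
    have : seqL (fun _ => g 0) 1 = [g 0, g 0] := by simp [seqL, List.range_succ]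
    rw [this]
    exact (EHom.fh hh hgd).symm.trans h1
  have := lemB hgeo hsym hrefl hE (fun _ => g 0) 1 (by norm_num) (by simpa using hε) rfl hl h2
  rw [hI] at this
  simp at this
  linarith

theorem choose_v (hgeo : IsGeodesicSpace X) {ε : ℝ} (hε : 0 < ε) {L : ℝ} (hL : 0 < L)
    {f : ℝ → X} (h : Lip L f) {τ : ℝ} (hτ : 0 ≤ τ) (hτε : L * τ ≤ 3 * ε / 2)
    (hlt : dist (f 0) (f τ) < L * τ) :
    ∃ a v, 0 ≤ a ∧ a ≤ τ ∧ L * a < ε ∧ L * (τ - a) < ε ∧ dist (f 0) v < ε ∧ dist v (f τ) < ε ∧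
      dist (f a) v < ε ∧ dist (f 0) v + dist v (f τ) ≤ dist (f 0) (f τ) := by
  set d := dist (f 0) (f τ) with hd
  have hd0 : 0 ≤ d := dist_nonneg
  rcases lt_or_ge d ε with hdε | hdε
  · refine ⟨τ / 2, f 0, by linarith, by linarith, by linarith, by linarith, by simpa using hε,
      hdε, ?_, by simp [hd]⟩
    have := h 0 (τ / 2) (by linarith)
    rw [dist_comm]; linarith
  · obtain ⟨k, k1, k2, k3⟩ := geod hgeo (f 0) (f τ)
    set T := (L * τ + d) / 3 with hT
    have ha : L * (T / L) = T := by field_simp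
    have ha0 : 0 ≤ T / L := div_nonneg (by simp only [hT]; linarith) hL.le
    have haτ : T / L ≤ τ := by
      rw [div_le_iff₀ hL]; simp only [hT]; linarith
    have v1 := k1 0 T (by simp only [hT]; linarith)
    have v2 := k1 T d (by simp only [hT]; linarith)
    rw [k2] at v1
    rw [k3] at v2
    have u2 := h _ _ haτ
    refine ⟨T / L, k T, ha0, haτ, by rw [ha]; simp only [hT]; linarith, ?_, by simp only [hT] at *; linarith,
      by simp only [hT] at *; linarith, ?_, by linarith⟩
    · rw [mul_sub, ha]; simp only [hT]; linarith
    · have := dist_triangle (f (T / L)) (f τ) (k T)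
      rw [dist_comm (f τ)] at this
      rw [mul_sub, ha] at u2
      simp only [hT] at *
      linarith

theorem arc0 (hgeo : IsGeodesicSpace X) (hsym : ∀ a b, (a, b) ∈ E → (b, a) ∈ E)
    (hrefl : ∀ a, (a, a) ∈ E) {ε : ℝ} (hε : 0 < ε) (hE : MetricEnt X ε ⊆ E) {L : ℝ} (hL : 0 < L)
    (hL3 : 3 * ε ≤ L)
    {f : ℝ → X} (h : Lip L f) (hfcl : f 0 = f 1)
    {c : ℝ → X} {l : List X} (hl : IsSubdivision E c l)
    (hg : ∀ m, IsSubdivision E f m → FH E m l)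
    (hI : sInf (Cls E c) = ENNReal.ofReal L) {τ : ℝ} (hτ : 0 ≤ τ) (hτε : L * τ ≤ 3 * ε / 2) :
    dist (f 0) (f τ) = L * τ := by
  by_contra hne
  have hle := h 0 τ hτ
  rw [sub_zero] at hle
  have hlt := lt_of_le_of_ne hle hne
  obtain ⟨a, v, a0, aτ, hLa, hLa', v1, v2, v3, v4⟩ := choose_v hgeo hε hL h hτ hτε hlt
  have hτ1 : τ ≤ 1 := by nlinarith
  obtain ⟨N, hN⟩ := exists_nat_gt (L / ε)
  have hN0 : (0:ℝ) < N := lt_trans (by positivity) hN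
  have hNε : L * ((1 - τ) / N) < ε := by
    rw [div_lt_iff₀ hε] at hN
    rw [← mul_div_assoc, div_lt_iff₀ hN0]
    nlinarith
  have hst : 0 ≤ (1 - τ) / N := div_nonneg (by linarith) hN0.le
  let T : ℕ → ℝ := fun i => match i with
    | 0 => 0
    | 1 => a
    | (i + 2) => τ + i * ((1 - τ) / N)
  have T2 : ∀ i : ℕ, T (i + 2) = τ + i * ((1 - τ) / N) := fun i => rfl
  have T3 : ∀ i : ℕ, T (i + 2 + 1) = τ + i * ((1 - τ) / N) + (1 - τ) / N := fun i => by
    change τ + ((i + 1 : ℕ):ℝ) * ((1 - τ) / N) = _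
    push_cast; ring
  have hTN : T (N + 2) = 1 := by rw [T2]; field_simp; ring
  have hT02 : T 2 = τ := by rw [T2 0]; simp
  have hsub : IsSubdivision E f (seqL (fun i => f (T i)) (N + 2)) := by
    refine h.sub hE hL.le T (N + 2) rfl hTN ?_ ?_
    · intro i hi
      match i with
      | 0 => exact a0
      | 1 => change a ≤ T 2; rw [hT02]; exact aτ
      | (i + 2) => rw [T3, T2]; linarith
    · intro i hi
      match i with
      | 0 => change L * (a - 0) < ε; rwa [sub_zero]
      | 1 => change L * (T 2 - a) < ε; rwa [hT02]
      | (i + 2) =>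
        rw [T3, T2, add_sub_cancel_left]; exact hNε
  have hgd := sub_good hfcl hsub
  have h1 := hg _ hsub
  let z : ℕ → X := fun i => match i with
    | 0 => f 0
    | 1 => v
    | (i + 2) => f (T (i + 2))
  have z2 : z 2 = f τ := by change f (T 2) = _; rw [hT02]
  obtain ⟨r, hr⟩ := seqL_head (fun i => f (T (i + 2))) N
  have e1 : seqL (fun i => f (T i)) (N + 2) = f 0 :: f a :: f τ :: r := by
    rw [seqL_cons, seqL_cons]
    change f 0 :: f a :: seqL (fun i => f (T (i + 2))) N = _
    rw [hr]
    change f 0 :: f a :: f (T 2) :: r = _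
    rw [hT02]
  have e2 : seqL z (N + 2) = f 0 :: v :: f τ :: r := by
    rw [seqL_cons, seqL_cons]
    change f 0 :: v :: seqL (fun i => f (T (i + 2))) N = _
    rw [hr]
    change f 0 :: v :: f (T 2) :: r = _
    rw [hT02]
  have s1 : EStep E (f 0 :: f a :: f τ :: r) (f 0 :: f a :: v :: f τ :: r) :=
    EStep.insert [f 0] (f a) v (f τ) r (hE v3) (hE v2)
  have s2 : EStep E (f 0 :: f a :: v :: f τ :: r) (f 0 :: v :: f τ :: r) :=
    EStep.remove [] (f 0) (f a) v (f τ :: r) (hE v1)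
  have hh : EHomotopic E (f 0 :: f a :: f τ :: r) (f 0 :: v :: f τ :: r) := .head s1 (.single s2)
  have hfh : FH E (seqL z (N + 2)) l := by
    rw [e2]
    rw [e1] at h1 hgd
    exact (EHom.fh hh hgd).symm.trans h1
  have hedge : ∀ i : ℕ, dist (z (i + 2)) (z (i + 2 + 1)) ≤ L * ((1 - τ) / N) := by
    intro i
    change dist (f (T (i + 2))) (f (T (i + 2 + 1))) ≤ _
    have := h (T (i + 2)) (T (i + 2 + 1)) (by rw [T3, T2]; linarith)
    rwa [show T (i + 2 + 1) - T (i + 2) = (1 - τ) / N by rw [T3, T2]; ring] at this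
  have hB := lemB hgeo hsym hrefl hE z (N + 2) (by omega) (by
    intro i hi
    match i with
    | 0 => exact v1
    | 1 => change dist v (z 2) < ε; rw [z2]; exact v2
    | (i + 2) => exact (hedge i).trans_lt hNε) (by
      change f 0 = f (T (N + 2)); rw [hTN]; exact hfcl) hl hfh
  rw [hI, ENNReal.ofReal_le_ofReal_iff (Finset.sum_nonneg (fun _ _ => dist_nonneg)),
    Finset.sum_range_succ', Finset.sum_range_succ'] at hB
  have b1 : ∑ i ∈ Finset.range N, dist (z (i + 1 + 1)) (z (i + 1 + 1 + 1)) ≤ L * (1 - τ) := by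
    calc _ ≤ ∑ i ∈ Finset.range N, L * ((1 - τ) / N) := Finset.sum_le_sum (fun i _ => hedge i)
      _ = L * (1 - τ) := by
        rw [Finset.sum_const, Finset.card_range, nsmul_eq_mul]; field_simp
  have b2 : dist (z (0 + 1)) (z (0 + 1 + 1)) = dist v (f τ) := by
    change dist v (z 2) = _; rw [z2]
  have b3 : dist (z 0) (z (0 + 1)) = dist (f 0) v := rfl
  rw [b2, b3] at hB
  linarith

theorem part3 (hgeo : IsGeodesicSpace X) (hsym : ∀ a b, (a, b) ∈ E → (b, a) ∈ E)
    (hrefl : ∀ a, (a, a) ∈ E) {ε : ℝ} (hε : 0 < ε) (hE : MetricEnt X ε ⊆ E) {c : ℝ → X}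
    (hc : ContinuousOn c (Icc 0 1)) (hcl : c 0 = c 1) {cbar : ℝ → X}
    (hb : ContinuousOn cbar (Icc 0 1)) (hbcl : cbar 0 = cbar 1) (hprop : PropToArclength cbar)
    (hbc : CurveFreelyEHomotopic E cbar c)
    (hv : eVariationOn cbar (Set.Icc 0 1) = sInf (Cls E c))
    (hnc : ∃ s ∈ Set.Icc (0:ℝ) 1, ∃ t ∈ Set.Icc (0:ℝ) 1, cbar s ≠ cbar t) :
    IsClosedKGeodesic cbar (3 * ε / 2) := by
  have hI := inf_fin hgeo hsym hrefl hε hE hc hcl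
  obtain ⟨L, hL0, hLI⟩ : ∃ L : ℝ, 0 ≤ L ∧ sInf (Cls E c) = ENNReal.ofReal L :=
    ⟨_, ENNReal.toReal_nonneg, (ENNReal.ofReal_toReal hI).symm⟩
  rw [hLI] at hv
  have hL : 0 < L := by
    rcases hL0.eq_or_lt with h | h
    · exfalso
      rw [← h, ENNReal.ofReal_zero, eVariationOn.eq_zero_iff] at hv
      obtain ⟨s, hs, t, ht, hst⟩ := hnc
      exact hst (edist_eq_zero.1 (hv s hs t ht))
    · exact h
  have hvar : ∀ b ∈ Icc (0:ℝ) 1, eVariationOn cbar (Icc 0 b) = ENNReal.ofReal (b * L) := by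
    intro b hb
    rw [hprop b hb, hv, ENNReal.ofReal_mul hb.1]
  have hlip : ∀ a b, 0 ≤ a → a ≤ b → b ≤ 1 → dist (cbar a) (cbar b) ≤ L * (b - a) := by
    intro a b h0 hab h1
    have e := var_split cbar h0 hab
    rw [hvar a ⟨h0, hab.trans h1⟩, hvar b ⟨h0.trans hab, h1⟩] at e
    have i2 := eVariationOn.edist_le cbar (s := Icc a b) (x := a) (y := b) (by simp [hab]) (by simp [hab])
    have : ENNReal.ofReal (a * L) + edist (cbar a) (cbar b) ≤ ENNReal.ofReal (b * L) := by
      rw [e]; gcongr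
    rw [edist_dist, ← ENNReal.ofReal_add (by positivity) dist_nonneg,
      ENNReal.ofReal_le_ofReal_iff (mul_nonneg (h0.trans hab) hL0)] at this
    linarith
  obtain ⟨g, hgdef⟩ : ∃ g : ℝ → X, g = fun u => cbar (Int.fract u) := ⟨_, rfl⟩
  have hper : ∀ (u : ℝ) (n : ℤ), g (u + n) = g u := by
    intro u n; simp [hgdef]
  have hgL : Lip L g := by
    intro s t hst
    simp only [hgdef]
    have fs := Int.fract_nonneg s
    have fs' := Int.fract_lt_one s
    have ft := Int.fract_nonneg t
    have ft' := Int.fract_lt_one t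
    have es := Int.floor_add_fract s
    have et := Int.floor_add_fract t
    rcases (Int.floor_mono hst).eq_or_lt with h | h
    · have h' : (⌊s⌋:ℝ) = ⌊t⌋ := by exact_mod_cast h
      have := hlip (Int.fract s) (Int.fract t) fs (by linarith) ft'.le
      rwa [show Int.fract t - Int.fract s = t - s by linarith] at this
    · have h' : (⌊s⌋:ℝ) + 1 ≤ ⌊t⌋ := by exact_mod_cast h
      have a1 := hlip (Int.fract s) 1 fs fs'.le le_rfl
      have a2 := hlip 0 (Int.fract t) le_rfl ft ft'.le
      rw [hbcl] at a2
      have := dist_triangle (cbar (Int.fract s)) (cbar 1) (cbar (Int.fract t))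
      have : L * (1 - Int.fract s + Int.fract t) ≤ L * (t - s) :=
        mul_le_mul_of_nonneg_left (by linarith) hL0
      linarith
  have hg01 : ∀ u ∈ Icc (0:ℝ) 1, g (0 + u) = cbar u := by
    intro u hu
    simp only [hgdef, zero_add]
    rcases hu.2.eq_or_lt with h | h
    · rw [h]; simp [hbcl]
    · rw [Int.fract_eq_self.2 ⟨hu.1, h⟩]
  -- all subdivisions of g(0 + ·) are equivalent to a fixed subdivision of c
  obtain ⟨N₀, -, hl₀, -⟩ := fine_sub hε hE hc
  obtain ⟨N₁, -, hl₁, -⟩ := fine_sub hε hE hb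
  have hl₂ : ∀ m, IsSubdivision E (fun t => g (0 + t)) m →
      FH E m (seqL (fun i : ℕ => c ((i:ℝ) / N₀)) N₀) := by
    intro m hm
    have hm2 : IsSubdivision E cbar m := by
      obtain ⟨ts, t1, t2, t3, t4, t5⟩ := hm
      have t5' : ts.IsChain (fun a b => a ≤ b ∧ ∀ s, a ≤ s → s ≤ b →
        g (0 + s) ∈ EBall E (g (0 + a)) ∩ EBall E (g (0 + b))) := t5
      have hpw : ts.Pairwise (· ≤ ·) := by
        rw [← List.isChain_iff_pairwise]
        exact t5'.imp (fun _ _ h => h.1)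
      have hmem : ∀ u ∈ ts, u ∈ Icc (0:ℝ) 1 := by
        intro u hu
        constructor
        · obtain ⟨r, rfl⟩ : ∃ r, ts = 0 :: r := by
            cases ts <;> simp_all
          rcases List.mem_cons.1 hu with h | h
          · rw [h]
          · exact (List.pairwise_cons.1 hpw).1 u h
        · obtain rfl | ⟨r, w, rfl⟩ := List.eq_nil_or_concat' ts
          · simp at hu
          have : w = 1 := by simpa using t2
          subst this
          rcases List.mem_append.1 hu with h | h
          · exact (List.pairwise_append.1 hpw).2.2 u h 1 (by simp)
          · simp at h; rw [h]
      refine ⟨ts, t1, t2, ?_, t4, ?_⟩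
      · rw [t3]
        apply List.map_congr_left
        intro u hu
        exact hg01 u (hmem u hu)
      · change List.IsChain _ ts
        rw [List.isChain_iff_getElem] at t5' ⊢
        intro i hi
        obtain ⟨q1, q2⟩ := t5' i hi
        refine ⟨q1, fun s a b => ?_⟩
        have m1 := hmem _ (List.getElem_mem (l := ts) (n := i) (by omega))
        have m2 := hmem _ (List.getElem_mem (l := ts) (n := i + 1) hi)
        have := q2 s a b
        rwa [hg01 s ⟨m1.1.trans a, b.trans m2.2⟩, hg01 _ m1, hg01 _ m2] at this
    exact cls_fh hsym hε hE hb hbcl hc hcl hbc hm2 hl₀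
  have hL3 := L_large hgeo hsym hrefl hε hE hL hgL hper hl₀ hl₂ hLI
  have hex0 : ∃ m, IsSubdivision E (fun t => g (0 + t)) m := by
    obtain ⟨N, -, h, -⟩ := fine_sub hε hE (f := fun t => g (0 + t))
      ((hgL.comp_add 0).contOn hL0).continuousOn
    exact ⟨_, h⟩
  obtain ⟨m₀, hm₀⟩ := hex0
  have arc : ∀ s τ : ℝ, 0 ≤ τ → L * τ ≤ 3 * ε / 2 → dist (g s) (g (s + τ)) = L * τ := by
    have main : ∀ s τ : ℝ, 0 ≤ s → 0 ≤ τ → L * τ ≤ 3 * ε / 2 → dist (g s) (g (s + τ)) = L * τ := by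
      intro s τ hs hτ hτε
      have := arc0 hgeo hsym hrefl hε hE hL hL3 (hgL.comp_add s) (by
          have := hper s 1
          simpa using this.symm) hl₀
        (fun m hm => (rot_all hsym hrefl hε hE hL0 hgL hper s hs hm hm₀).trans (hl₂ _ hm₀))
        hLI hτ hτε
      simpa using this
    intro s τ hτ hτε
    have := main (Int.fract s) τ (Int.fract_nonneg s) hτ hτε
    have e1 : g s = g (Int.fract s) := by simp [hgdef]
    have e2 : g (s + τ) = g (Int.fract s + τ) := by
      rw [← hper (Int.fract s + τ) ⌊s⌋]
      congr 1
      have := Int.floor_add_fract s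
      linarith
    rw [e1, e2]; exact this
  refine ⟨hbcl, ?_⟩
  intro s t hst
  change eVariationOn (fun u => cbar (Int.fract u)) (Icc s t) ≤ _ → eVariationOn (fun u => cbar (Int.fract u)) (Icc s t) =
    ENNReal.ofReal (dist ((fun u => cbar (Int.fract u)) s) ((fun u => cbar (Int.fract u)) t))
  rw [← hgdef]
  intro hvt
  have hsmall : L * (t - s) ≤ 3 * ε / 2 := by
    by_contra hcon
    push Not at hcon
    set k := 3 * ε / 2 / L with hk
    have hk0 : 0 < k := by positivity
    have hLk : L * k = 3 * ε / 2 := by simp only [hk]; field_simp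
    have hkt : k < t - s := by
      simp only [hk]; rw [div_lt_iff₀ hL]; linarith
    set δ := min (t - s - k) k with hδ
    have hδ0 : 0 < δ := lt_min (by linarith) hk0
    have hδ1 : δ ≤ t - s - k := min_le_left _ _
    have hδ2 : δ ≤ k := min_le_right _ _
    have d1 := arc s k hk0.le hLk.le
    have d2 := arc (s + k) δ hδ0.le (by rw [← hLk]; exact mul_le_mul_of_nonneg_left hδ2 hL0)
    have i1 := eVariationOn.edist_le g (s := Icc s (s + k)) (x := s) (y := s + k)
      (by simp [hk0.le]) (by simp [hk0.le])
    have i2 := eVariationOn.edist_le g (s := Icc (s + k) t) (x := s + k) (y := s + k + δ)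
      ⟨by linarith, by linarith⟩ ⟨by linarith, by linarith⟩
    have e := var_split g (a := s) (b := s + k) (c := t) (by linarith) (by linarith)
    rw [e] at hvt
    have := (add_le_add i1 i2).trans hvt
    rw [edist_dist, edist_dist, d1, d2, ← ENNReal.ofReal_add (by positivity) (by positivity),
      ENNReal.ofReal_le_ofReal_iff (by positivity)] at this
    have : 0 < L * δ := by positivity
    linarith
  have hd := arc s (t - s) (by linarith) hsmall
  rw [add_sub_cancel] at hd
  apply le_antisymm
  · rw [hd]; exact hgL.var hL0 hst
  · rw [← edist_dist]
    exact eVariationOn.edist_le g (by simp [hst]) (by simp [hst])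

end SFC

/-- in a compact geodesic space with chained entourage `E`, every closed
curve `c` has a shortest closed curve `c̄` in its free `E`-homotopy class; any such `c̄`
is non-constant iff `c` is not freely `E`-null, and a non-constant such `c̄` is a closed
`(3ε/2)`-geodesic whenever `E_ε ⊆ E`. -/
theorem shortest_in_free_class [CompactSpace X] (hgeo : IsGeodesicSpace X)
    (E : Set (X × X)) (hE : IsChained E) (c : ℝ → X)
    (hc : ContinuousOn c (Set.Icc 0 1)) (hcl : c 0 = c 1) :
    (∃ cbar : ℝ → X, ContinuousOn cbar (Set.Icc 0 1) ∧ cbar 0 = cbar 1 ∧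
      PropToArclength cbar ∧ CurveFreelyEHomotopic E cbar c ∧
      eVariationOn cbar (Set.Icc 0 1) =
        sInf {L : ℝ≥0∞ | ∃ f : ℝ → X, ContinuousOn f (Set.Icc 0 1) ∧ f 0 = f 1 ∧
          CurveFreelyEHomotopic E f c ∧ eVariationOn f (Set.Icc 0 1) = L}) ∧
    (∀ cbar : ℝ → X, ContinuousOn cbar (Set.Icc 0 1) → cbar 0 = cbar 1 →
      PropToArclength cbar → CurveFreelyEHomotopic E cbar c →
      eVariationOn cbar (Set.Icc 0 1) =
        sInf {L : ℝ≥0∞ | ∃ f : ℝ → X, ContinuousOn f (Set.Icc 0 1) ∧ f 0 = f 1 ∧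
          CurveFreelyEHomotopic E f c ∧ eVariationOn f (Set.Icc 0 1) = L} →
      (((∃ s ∈ Set.Icc (0:ℝ) 1, ∃ t ∈ Set.Icc (0:ℝ) 1, cbar s ≠ cbar t) ↔
          ¬ ∃ l : List X, IsSubdivision E c l ∧ ∃ x : X, FreelyEHomotopic E l [x]) ∧
        ((∃ s ∈ Set.Icc (0:ℝ) 1, ∃ t ∈ Set.Icc (0:ℝ) 1, cbar s ≠ cbar t) →
          ∀ ε > 0, MetricEnt X ε ⊆ E → IsClosedKGeodesic cbar (3 * ε / 2)))) := by
  obtain ⟨⟨hsym, ε, hε, hEε⟩, -⟩ := id hE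
  have hsym' : ∀ a b, (a, b) ∈ E → (b, a) ∈ E := fun a b h => hsym (a, b) h
  have hrefl : ∀ a, (a, a) ∈ E := fun a => hEε (show dist a a < ε by simpa using hε)
  refine ⟨SFC.part1 hgeo hsym' hrefl hε hEε hc hcl, ?_⟩
  intro cbar h1 h2 h3 h4 h5
  refine ⟨SFC.part2 hsym' hrefl hε hEε hc hcl h1 h2 h4 h5, ?_⟩
  intro h6 ε' hε' hE'
  exact SFC.part3 hgeo hsym' hrefl hε' hE' hc hcl h1 h2 h3 h4 h5 h6
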